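/- Under the non-stationary zero-returns model with mixing, and with the kernel estimators defined from a kernel and bandwidth satisfying the kernel and bandwidth assumption, the vector Γ̂_vpr(m) = (ρ̂_vpr(1),…,ρ̂_vpr(m))' converges in probability, as n → ∞, to Γ_ε(m) = (ρ_ε(1),…,ρ_ε(m))'. -/

import Mathlib

open MeasureTheory ProbabilityTheory Filter Set

namespace ZeroReturnsNS

variable {Ω : Type*} [MeasurableSpace Ω]

/-- A function is piecewise Lipschitz on `(0,1]` if `(0,1]` is a finite disjoint union of
intervals on each of which the function is Lipschitz. -/
def PiecewiseLipschitzOn01 (f : ℝ → ℝ) : Prop :=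
  ∃ (p : ℕ) (I : Fin p → Set ℝ) (C : Fin p → NNReal),
    (∀ l, (I l).OrdConnected) ∧
    Pairwise (Function.onFun Disjoint I) ∧
    (⋃ l, I l) = Set.Ioc (0 : ℝ) 1 ∧
    ∀ l, LipschitzOnWith (C l) f (I l)

/-- The triangular array of returns `r_t = v(t/n) ε_t`. -/
noncomputable def rproc (v : ℝ → ℝ) (ε : ℕ → ℕ → Ω → ℝ) (n t : ℕ) (ω : Ω) : ℝ :=
  v ((t : ℝ) / n) * ε n t ω

/-- The zero-return indicator `a_t = 1_{r_t ≠ 0}`. -/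
noncomputable def aproc (v : ℝ → ℝ) (ε : ℕ → ℕ → Ω → ℝ) (n t : ℕ) (ω : Ω) : ℝ :=
  if rproc v ε n t ω ≠ 0 then 1 else 0

/-- The σ-field `σ(ε_u : u ≤ t)` of the past of the `n`-th row of the array. -/
noncomputable def pastField (ε : ℕ → ℕ → Ω → ℝ) (n t : ℕ) : MeasurableSpace Ω :=
  ⨆ u ∈ {u : ℕ | u ≤ t}, MeasurableSpace.comap (ε n u) inferInstance

/-- The σ-field `σ(ε_u : u ≥ t)` of the future of the `n`-th row of the array. -/
noncomputable def futureField (ε : ℕ → ℕ → Ω → ℝ) (n t : ℕ) : MeasurableSpace Ω :=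
  ⨆ u ∈ {u : ℕ | t ≤ u}, MeasurableSpace.comap (ε n u) inferInstance

/-- The strong (α-)mixing coefficients of `(ε_t)`:
`α_ε(h) = sup { |P(A∩B) - P(A)P(B)| : A ∈ σ(ε_u : u ≤ t), B ∈ σ(ε_u : u ≥ t+h) }`. -/
noncomputable def alphaMix (μ : Measure Ω) (ε : ℕ → ℕ → Ω → ℝ) (h : ℕ) : ℝ :=
  ⨆ n : ℕ, ⨆ t : ℕ, sSup {x : ℝ | ∃ A B : Set Ω,
    MeasurableSet[pastField ε n t] A ∧ MeasurableSet[futureField ε n (t + h)] B ∧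
    x = |(μ (A ∩ B)).toReal - (μ A).toReal * (μ B).toReal|}

/-- `K_{ti} = K((t-i)/(nb))` for `t ≠ i`, and `K_{tt} = 0`. -/
noncomputable def Kw (K : ℝ → ℝ) (b : ℕ → ℝ) (n t i : ℕ) : ℝ :=
  if t = i then 0 else K (((t : ℝ) - (i : ℝ)) / ((n : ℝ) * b n))

/-- The kernel weights `w_{tj}(b) = K_{tj} / Σ_{i=1}^n K_{ti}`. -/
noncomputable def wgt (K : ℝ → ℝ) (b : ℕ → ℝ) (n t j : ℕ) : ℝ :=
  Kw K b n t j / ∑ i ∈ Finset.Icc 1 n, Kw K b n t i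

/-- The kernel estimator `p̂_t = Σ_{j=1}^n w_{tj}(b) a_j` of `P(a_t = 1)`. -/
noncomputable def phat (v : ℝ → ℝ) (ε : ℕ → ℕ → Ω → ℝ) (K : ℝ → ℝ) (b : ℕ → ℝ)
    (n t : ℕ) (ω : Ω) : ℝ :=
  ∑ j ∈ Finset.Icc 1 n, wgt K b n t j * aproc v ε n j ω

/-- The kernel estimator `p̂_{t,t-h} = Σ_{j=1+h}^n w_{tj}(b) a_j a_{j-h}` of
`P(a_t a_{t-h} = 1)`. -/
noncomputable def phat2 (v : ℝ → ℝ) (ε : ℕ → ℕ → Ω → ℝ) (K : ℝ → ℝ) (b : ℕ → ℝ)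
    (n h t : ℕ) (ω : Ω) : ℝ :=
  ∑ j ∈ Finset.Icc (h + 1) n, wgt K b n t j * (aproc v ε n j ω * aproc v ε n (j - h) ω)

/-- `γ̂_{ar²}(h) = (n-h)⁻¹ Σ_{t=1+h}^n r_t² p̂_{t,t-h}/p̂_t`
(terms with `p̂_t = 0` are set to zero). -/
noncomputable def gammaAr2 (v : ℝ → ℝ) (ε : ℕ → ℕ → Ω → ℝ) (K : ℝ → ℝ) (b : ℕ → ℝ)
    (n h : ℕ) (ω : Ω) : ℝ :=
  ((n : ℝ) - (h : ℝ))⁻¹ * ∑ t ∈ Finset.Icc (h + 1) n, (rproc v ε n t ω) ^ 2 *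
    (if phat v ε K b n t ω = 0 then 0 else phat2 v ε K b n h t ω / phat v ε K b n t ω)

/-- `γ̂_0(h) = n⁻¹ Σ_{t=1+h}^n r_t r_{t-h}`. -/
noncomputable def gammaHat0 (v : ℝ → ℝ) (ε : ℕ → ℕ → Ω → ℝ) (n h : ℕ) (ω : Ω) : ℝ :=
  (n : ℝ)⁻¹ * ∑ t ∈ Finset.Icc (h + 1) n, rproc v ε n t ω * rproc v ε n (t - h) ω

/-- `γ̂_a(h) = n⁻¹ Σ_{t=1+h}^n a_t a_{t-h}`. -/
noncomputable def gammaHatA (v : ℝ → ℝ) (ε : ℕ → ℕ → Ω → ℝ) (n h : ℕ) (ω : Ω) : ℝ :=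
  (n : ℝ)⁻¹ * ∑ t ∈ Finset.Icc (h + 1) n, aproc v ε n t ω * aproc v ε n (t - h) ω

/-- `ρ̂_0(h) = γ̂_0(h)/γ̂_0(0)`. -/
noncomputable def rhoHat0 (v : ℝ → ℝ) (ε : ℕ → ℕ → Ω → ℝ) (n h : ℕ) (ω : Ω) : ℝ :=
  gammaHat0 v ε n h ω / gammaHat0 v ε n 0 ω

/-- `ρ̂_vpr(h) = (γ̂_0(0)/γ̂_{ar²}(h)) ρ̂_0(h)`. -/
noncomputable def rhoHatVpr (v : ℝ → ℝ) (ε : ℕ → ℕ → Ω → ℝ) (K : ℝ → ℝ) (b : ℕ → ℝ)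
    (n h : ℕ) (ω : Ω) : ℝ :=
  (gammaHat0 v ε n 0 ω / gammaAr2 v ε K b n h ω) * rhoHat0 v ε n h ω

/-- `ρ̂_pr(h) = ρ̂_0(h) γ̂_a(0)/γ̂_a(h)`. -/
noncomputable def rhoHatPr (v : ℝ → ℝ) (ε : ℕ → ℕ → Ω → ℝ) (n h : ℕ) (ω : Ω) : ℝ :=
  rhoHat0 v ε n h ω * (gammaHatA v ε n 0 ω / gammaHatA v ε n h ω)

end ZeroReturnsNS

namespace ZeroReturnsNS

/-
Covariances of bounded functions of windows `ε_{t-h},…,ε_t` are controlled by the strong mixing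
coefficients, which gives a weak law for sums with negligible weights; truncation extends it to
variables bounded in `L^{1+ν}`. With weights `1/n` the weak law and Riemann sums, taken along
`x ↦ ⌈xn⌉`, give `γ̂_0(h) → ρ_ε(h) ∫₀¹ v² g_h`, since `a_t a_{t-h} = 0` forces `r_t r_{t-h} = 0`.
With kernel weights it shows that `p̂_{t,t-h} / p̂_t` is close to `g_h(t/n) / g_0(t/n)` in `L¹`,
whence `γ̂_{ar²}(h) → ∫₀¹ v² (g_h / g_0) g_0 = ∫₀¹ v² g_h`. The common factor `∫₀¹ v² g_h` cancels
in the limit of `ρ̂_vpr(h) = γ̂_0(h) / γ̂_{ar²}(h)`.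
-/

section ConvergenceInMeasure

variable {Ω ι : Type*} {m₀ : MeasurableSpace Ω} {μ : Measure Ω} {l : Filter ι}

lemma tendstoInMeasure_comp_continuousAt {E F : Type*} [PseudoEMetricSpace E] [PseudoEMetricSpace F]
    {Y : ι → Ω → E} {y : E} {φ : E → F} (hφ : ContinuousAt φ y)
    (hY : TendstoInMeasure μ Y l fun _ => y) :
    TendstoInMeasure μ (fun i ω => φ (Y i ω)) l fun _ => φ y := by
  intro δ hδ
  obtain ⟨η, hη, h⟩ := EMetric.tendsto_nhds_nhds.1 hφ δ hδ
  refine tendsto_of_tendsto_of_tendsto_of_le_of_le tendsto_const_nhds (hY η hη)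
    (fun _ => zero_le) fun i => measure_mono fun ω hω => ?_
  exact not_lt.1 fun hlt => (h hlt).not_ge hω

lemma tendstoInMeasure_prodMk {E F : Type*} [PseudoEMetricSpace E] [PseudoEMetricSpace F]
    {Y y} {Z z} (hY : TendstoInMeasure μ (Y : ι → Ω → E) l y)
    (hZ : TendstoInMeasure μ (Z : ι → Ω → F) l z) :
    TendstoInMeasure μ (fun i ω => (Y i ω, Z i ω)) l fun ω => (y ω, z ω) := by
  intro δ hδ
  have hsum := (hY δ hδ).add (hZ δ hδ)
  rw [add_zero] at hsum
  refine tendsto_of_tendsto_of_tendsto_of_le_of_le tendsto_const_nhds hsum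
    (fun _ => zero_le) fun i => (measure_mono fun ω hω => ?_).trans (measure_union_le _ _)
  exact le_max_iff.1 (mem_ofPred_eq ▸ hω)

lemma tendstoInMeasure_pi {κ E : Type*} [Fintype κ] [PseudoEMetricSpace E]
    {Y : ι → Ω → κ → E} {y : Ω → κ → E}
    (h : ∀ k, TendstoInMeasure μ (fun i ω => Y i ω k) l fun ω => y ω k) :
    TendstoInMeasure μ Y l y := by
  intro δ hδ
  have hsum := tendsto_finsetSum Finset.univ fun k _ => h k δ hδ
  rw [Finset.sum_const_zero] at hsum
  refine tendsto_of_tendsto_of_tendsto_of_le_of_le tendsto_const_nhds hsum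
    (fun _ => zero_le) fun i => (measure_mono fun ω hω => ?_).trans
      (measure_iUnion_fintype_le μ _)
  contrapose! hω
  simp only [mem_iUnion, mem_ofPred_eq, not_exists, not_le] at hω ⊢
  exact (Finset.sup_lt_iff hδ).2 fun k _ => hω k

lemma tendstoInMeasure_of_tendsto_integral_abs_sub {Y : ι → Ω → ℝ} {Z : Ω → ℝ}
    (hY : ∀ i, Integrable (Y i) μ) (hZ : Integrable Z μ)
    (h : Tendsto (fun i => ∫ ω, |Y i ω - Z ω| ∂μ) l (nhds 0)) :
    TendstoInMeasure μ Y l Z := by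
  refine tendstoInMeasure_of_tendsto_eLpNorm one_ne_zero (fun i => (hY i).aestronglyMeasurable)
    hZ.aestronglyMeasurable ?_
  have hofReal := ENNReal.tendsto_ofReal h
  rw [ENNReal.ofReal_zero] at hofReal
  refine hofReal.congr fun i => ?_
  rw [eLpNorm_one_eq_lintegral_enorm, ← ofReal_integral_norm_eq_lintegral_enorm ((hY i).sub hZ)]
  rfl

lemma tendstoInMeasure_const_of_tendsto {E : Type*} [PseudoEMetricSpace E] {e : ι → E} {y : E}
    (he : Tendsto e l (nhds y)) :
    TendstoInMeasure μ (fun i (_ : Ω) => e i) l fun _ => y := by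
  intro δ hδ
  refine tendsto_const_nhds.congr' ?_
  filter_upwards [he.eventually (Metric.eball_mem_nhds y hδ)] with i hi
  simp [(not_le.2 hi : ¬ δ ≤ edist (e i) y)]

lemma tendsto_integral_abs_sub_of_tendsto_sub [IsProbabilityMeasure μ] {Y : ι → Ω → ℝ}
    {d e : ι → ℝ} (hY : ∀ i, Integrable (Y i) μ)
    (hd : Tendsto (fun i => ∫ ω, |Y i ω - d i| ∂μ) l (nhds 0))
    (hde : Tendsto (fun i => d i - e i) l (nhds 0)) :
    Tendsto (fun i => ∫ ω, |Y i ω - e i| ∂μ) l (nhds 0) := by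
  refine squeeze_zero (fun i => integral_nonneg fun ω => abs_nonneg _) (fun i => ?_)
    (by simpa using hd.add hde.abs)
  have hYd : Integrable (fun ω => |Y i ω - d i|) μ := ((hY i).sub (integrable_const _)).abs
  calc ∫ ω, |Y i ω - e i| ∂μ ≤ ∫ ω, (|Y i ω - d i| + |d i - e i|) ∂μ :=
        integral_mono ((hY i).sub (integrable_const _)).abs (hYd.add (integrable_const _))
          fun ω => abs_sub_le _ _ _
    _ = ∫ ω, |Y i ω - d i| ∂μ + |d i - e i| := by
        rw [integral_add hYd (integrable_const _)]; simp

end ConvergenceInMeasure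

section Covariance

variable {Ω : Type*} {m₁ m₂ m₀ : MeasurableSpace Ω} {μ : Measure Ω} {X Y Z : Ω → ℝ} {a M : ℝ}

lemma integral_abs_condExp_le [IsFiniteMeasure μ] (hm : m₁ ≤ m₀) (hZ : Integrable Z μ)
    (ha : ∀ A, MeasurableSet[m₁] A → |∫ ω in A, Z ω ∂μ| ≤ a) :
    ∫ ω, |(μ[Z|m₁]) ω| ∂μ ≤ 2 * a := by
  have hpos : MeasurableSet[m₁] {ω | 0 ≤ (μ[Z|m₁]) ω} :=
    measurableSet_le measurable_const stronglyMeasurable_condExp.measurable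
  have hneg : MeasurableSet[m₁] {ω | (μ[Z|m₁]) ω ≤ 0} :=
    measurableSet_le stronglyMeasurable_condExp.measurable measurable_const
  have hsplit := integral_norm_eq_pos_sub_neg (μ := μ) (f := μ[Z|m₁]) integrable_condExp
  rw [setIntegral_condExp hm hZ hpos, setIntegral_condExp hm hZ hneg] at hsplit
  simp only [Real.norm_eq_abs] at hsplit
  linarith [(abs_le.1 (ha _ hpos)).2, (abs_le.1 (ha _ hneg)).1]

lemma abs_integral_mul_le_of_abs_setIntegral_le [IsFiniteMeasure μ] (hm : m₁ ≤ m₀)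
    (hX : Measurable[m₁] X) (hXM : ∀ ω, |X ω| ≤ M) (hM : 0 ≤ M) (hZ : Integrable Z μ)
    (ha : ∀ A, MeasurableSet[m₁] A → |∫ ω in A, Z ω ∂μ| ≤ a) :
    |∫ ω, X ω * Z ω ∂μ| ≤ 2 * M * a := by
  have hXZ : Integrable (X * Z) μ :=
    hZ.bdd_mul (hX.mono hm le_rfl).aestronglyMeasurable (ae_of_all _ hXM)
  have hpull : ∫ ω, X ω * Z ω ∂μ = ∫ ω, X ω * (μ[Z|m₁]) ω ∂μ :=
    (integral_condExp hm).symm.trans (integral_congr_ae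
      (condExp_mul_of_stronglyMeasurable_left hX.stronglyMeasurable hXZ hZ))
  calc |∫ ω, X ω * Z ω ∂μ| ≤ ∫ ω, M * |(μ[Z|m₁]) ω| ∂μ := by
        rw [hpull, ← Real.norm_eq_abs]
        refine norm_integral_le_of_norm_le (integrable_condExp.abs.const_mul M)
          (ae_of_all _ fun ω => ?_)
        rw [Real.norm_eq_abs, abs_mul]
        exact mul_le_mul_of_nonneg_right (hXM ω) (abs_nonneg _)
    _ ≤ M * (2 * a) := by
        rw [integral_const_mul]
        exact mul_le_mul_of_nonneg_left (integral_abs_condExp_le hm hZ ha) hM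
    _ = 2 * M * a := by ring

variable [IsProbabilityMeasure μ]

lemma abs_setIntegral_sub_integral_le (h₁ : m₁ ≤ m₀) (h₂ : m₂ ≤ m₀) (hY : Measurable[m₂] Y)
    (hYM : ∀ ω, |Y ω| ≤ M) (hM : 0 ≤ M)
    (ha : ∀ A B, MeasurableSet[m₁] A → MeasurableSet[m₂] B →
      |μ.real (A ∩ B) - μ.real A * μ.real B| ≤ a) {A : Set Ω} (hA : MeasurableSet[m₁] A) :
    |∫ ω in A, (Y ω - μ[Y]) ∂μ| ≤ 2 * M * a := by
  have hA₀ := h₁ _ hA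
  have hYi : Integrable Y μ := .of_bound (hY.mono h₂ le_rfl).aestronglyMeasurable M
    (ae_of_all _ hYM)
  have hAi : Integrable (A.indicator 1 : Ω → ℝ) μ := (integrable_const 1).indicator hA₀
  have hswap : ∫ ω in A, (Y ω - μ[Y]) ∂μ
      = ∫ ω, Y ω * (A.indicator 1 ω - μ.real A) ∂μ := by
    have hYA : (fun ω => Y ω * A.indicator 1 ω) = A.indicator Y := by
      ext ω; by_cases hω : ω ∈ A <;> simp [hω]
    simp_rw [mul_sub]
    rw [integral_sub hYi.integrableOn (integrable_const _), setIntegral_const,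
      integral_sub (hYA ▸ hYi.indicator hA₀) (hYi.mul_const _), hYA, integral_indicator hA₀,
      integral_mul_const, smul_eq_mul, mul_comm]
  rw [hswap]
  refine abs_integral_mul_le_of_abs_setIntegral_le h₂ hY hYM hM
    (hAi.sub (integrable_const _)) fun B hB => ?_
  rw [integral_sub hAi.integrableOn (integrable_const _), setIntegral_const,
    setIntegral_indicator hA₀, inter_comm]
  simpa [mul_comm] using ha A B hA hB

lemma abs_covariance_le_of_bounded (h₁ : m₁ ≤ m₀) (h₂ : m₂ ≤ m₀)
    (hX : Measurable[m₁] X) (hY : Measurable[m₂] Y)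
    (hXM : ∀ ω, |X ω| ≤ M) (hYM : ∀ ω, |Y ω| ≤ M) (hM : 0 ≤ M)
    (ha : ∀ A B, MeasurableSet[m₁] A → MeasurableSet[m₂] B →
      |μ.real (A ∩ B) - μ.real A * μ.real B| ≤ a) :
    |cov[X, Y; μ]| ≤ 4 * M ^ 2 * a := by
  have hXi : Integrable X μ := .of_bound (hX.mono h₁ le_rfl).aestronglyMeasurable M
    (ae_of_all _ hXM)
  have hYi : Integrable Y μ := .of_bound (hY.mono h₂ le_rfl).aestronglyMeasurable M
    (ae_of_all _ hYM)
  have hYc : Integrable (fun ω => Y ω - μ[Y]) μ := hYi.sub (integrable_const _)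
  have hcov : cov[X, Y; μ] = ∫ ω, X ω * (Y ω - μ[Y]) ∂μ := by
    have hYc₀ : ∫ ω, (Y ω - μ[Y]) ∂μ = 0 := by
      rw [integral_sub hYi (integrable_const _)]; simp
    simp_rw [covariance, sub_mul]
    rw [integral_sub (hYc.bdd_mul hXi.aestronglyMeasurable (ae_of_all _ hXM))
      (hYc.const_mul _), integral_const_mul, hYc₀, mul_zero, sub_zero]
  rw [hcov]
  refine (abs_integral_mul_le_of_abs_setIntegral_le h₁ hX hXM hM hYc fun A hA =>
    abs_setIntegral_sub_integral_le h₁ h₂ hY hYM hM ha hA).trans_eq ?_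
  ring

end Covariance

section Mixing

variable {Ω : Type*} {ε : ℕ → ℕ → Ω → ℝ} {n u t : ℕ}

lemma measurable_pastField (h : u ≤ t) : Measurable[pastField ε n t] (ε n u) :=
  measurable_iff_comap_le.2 (le_iSup₂_of_le (f := fun (u : ℕ) (_ : u ∈ {u : ℕ | u ≤ t}) =>
    MeasurableSpace.comap (ε n u) inferInstance) u h le_rfl)

lemma measurable_futureField (h : t ≤ u) : Measurable[futureField ε n t] (ε n u) :=
  measurable_iff_comap_le.2 (le_iSup₂_of_le (f := fun (u : ℕ) (_ : u ∈ {u : ℕ | t ≤ u}) =>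
    MeasurableSpace.comap (ε n u) inferInstance) u h le_rfl)

variable [MeasurableSpace Ω]

lemma pastField_le (hε : ∀ n t, Measurable (ε n t)) (n t : ℕ) :
    pastField ε n t ≤ ‹MeasurableSpace Ω› :=
  iSup₂_le fun u _ => (hε n u).comap_le

lemma futureField_le (hε : ∀ n t, Measurable (ε n t)) (n t : ℕ) :
    futureField ε n t ≤ ‹MeasurableSpace Ω› :=
  iSup₂_le fun u _ => (hε n u).comap_le

variable {μ : Measure Ω} [IsProbabilityMeasure μ]

lemma abs_measureReal_inter_sub_mul_le_one (A B : Set Ω) :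
    |μ.real (A ∩ B) - μ.real A * μ.real B| ≤ 1 := by
  have hA : μ.real A ≤ 1 := measureReal_le_one
  have hB : μ.real B ≤ 1 := measureReal_le_one
  have hAB : μ.real (A ∩ B) ≤ 1 := measureReal_le_one
  have hA₀ : 0 ≤ μ.real A := measureReal_nonneg
  have hB₀ : 0 ≤ μ.real B := measureReal_nonneg
  have hAB₀ : 0 ≤ μ.real (A ∩ B) := measureReal_nonneg
  rw [abs_le]
  constructor <;> nlinarith

lemma le_alphaMix (n t h : ℕ) {A B : Set Ω} (hA : MeasurableSet[pastField ε n t] A)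
    (hB : MeasurableSet[futureField ε n (t + h)] B) :
    |μ.real (A ∩ B) - μ.real A * μ.real B| ≤ alphaMix μ ε h := by
  have hub : ∀ n t, ∀ x ∈ {x : ℝ | ∃ A B : Set Ω, MeasurableSet[pastField ε n t] A ∧
      MeasurableSet[futureField ε n (t + h)] B ∧
      x = |(μ (A ∩ B)).toReal - (μ A).toReal * (μ B).toReal|}, x ≤ 1 := by
    rintro n t x ⟨A, B, -, -, rfl⟩
    exact abs_measureReal_inter_sub_mul_le_one A B
  have hsup : ∀ n t, sSup _ ≤ (1 : ℝ) := fun n t => Real.sSup_le (hub n t) zero_le_one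
  unfold alphaMix
  refine le_ciSup_of_le ⟨1, ?_⟩ n (le_ciSup_of_le ⟨1, ?_⟩ t
    (le_csSup ⟨1, hub n t⟩ ⟨A, B, hA, hB, rfl⟩))
  · rintro _ ⟨n, rfl⟩
    exact ciSup_le (hsup n)
  · rintro _ ⟨t, rfl⟩
    exact hsup n t

lemma alphaMix_nonneg (h : ℕ) : 0 ≤ alphaMix μ ε h :=
  (abs_nonneg _).trans (le_alphaMix (μ := μ) (ε := ε) 0 0 h (A := ∅) (B := ∅)
    (@MeasurableSet.empty _ (_)) (@MeasurableSet.empty _ (_)))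

lemma tendsto_alphaMix_of_summable_rpow {p : ℝ} (hp : 0 < p)
    (hs : Summable fun h => alphaMix μ ε h ^ p) :
    Tendsto (alphaMix μ ε) atTop (nhds 0) := by
  have hroot := hs.tendsto_atTop_zero.rpow_const (p := p⁻¹) (Or.inr (by positivity))
  rw [Real.zero_rpow (inv_ne_zero hp.ne')] at hroot
  refine hroot.congr fun h => ?_
  rw [← Real.rpow_mul (alphaMix_nonneg h), mul_inv_cancel₀ hp.ne', Real.rpow_one]

end Mixing

section WeakLaw

/-- Nonnegative weights `w n t`, `t ∈ S n`, of total mass at most one, each of which is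
asymptotically negligible: the weighting schemes for which a weak law is available. -/
structure NegligibleWeights (S : ℕ → Finset ℕ) (w : ℕ → ℕ → ℝ) : Prop where
  nonneg : ∀ n, ∀ t ∈ S n, 0 ≤ w n t
  sum_le_one : ∀ n, ∑ t ∈ S n, w n t ≤ 1
  eventually_le : ∀ δ > 0, ∀ᶠ n in atTop, ∀ t ∈ S n, w n t ≤ δ

lemma card_filter_dist_lt_le (S : Finset ℕ) (s L : ℕ) :
    (S.filter fun t => Nat.dist s t < L).card ≤ 2 * L + 1 := by
  have hsub : (S.filter fun t => Nat.dist s t < L) ⊆ Finset.Icc (s - L) (s + L) := by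
    intro t ht
    have hdist : s - t + (t - s) < L := (Finset.mem_filter.1 ht).2
    rw [Finset.mem_Icc]
    omega
  refine (Finset.card_le_card hsub).trans ?_
  rw [Nat.card_Icc]
  omega

namespace NegligibleWeights

variable {S : ℕ → Finset ℕ} {w : ℕ → ℕ → ℝ}

lemma sum_mul_le (hw : NegligibleWeights S w) {n : ℕ} {f : ℕ → ℝ} {B : ℝ} (hB : 0 ≤ B)
    (hf : ∀ t ∈ S n, f t ≤ B) : ∑ t ∈ S n, w n t * f t ≤ B :=
  calc ∑ t ∈ S n, w n t * f t ≤ ∑ t ∈ S n, w n t * B :=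
        Finset.sum_le_sum fun t ht => mul_le_mul_of_nonneg_left (hf t ht) (hw.nonneg n t ht)
    _ ≤ 1 * B := by
        rw [← Finset.sum_mul]
        exact mul_le_mul_of_nonneg_right (hw.sum_le_one n) hB
    _ = B := one_mul B

lemma abs_sum_mul_le (hw : NegligibleWeights S w) {n : ℕ} {f : ℕ → ℝ} {B : ℝ} (hB : 0 ≤ B)
    (hf : ∀ t ∈ S n, |f t| ≤ B) : |∑ t ∈ S n, w n t * f t| ≤ B := by
  refine (Finset.abs_sum_le_sum_abs _ _).trans ((Finset.sum_congr rfl fun t ht => ?_).trans_le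
    (hw.sum_mul_le hB hf))
  rw [abs_mul, abs_of_nonneg (hw.nonneg n t ht)]

lemma abs_sum_mul_le_of_far (hw : NegligibleWeights S w) {n s L : ℕ} {f : ℕ → ℝ} {B δ η : ℝ}
    (hB₀ : 0 ≤ B) (hη : 0 ≤ η) (hδ : 0 ≤ δ) (hwη : ∀ t ∈ S n, w n t ≤ η) (hB : ∀ t ∈ S n, |f t| ≤ B)
    (hfar : ∀ t ∈ S n, L ≤ Nat.dist s t → |f t| ≤ δ) :
    |∑ t ∈ S n, w n t * f t| ≤ (2 * L + 1) * (η * B) + δ := by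
  rw [← Finset.sum_filter_add_sum_filter_not (S n) fun t => Nat.dist s t < L]
  refine (abs_add_le _ _).trans (add_le_add ?_ ?_)
  · refine (Finset.abs_sum_le_sum_abs _ _).trans ((Finset.sum_le_card_nsmul _ _ (η * B)
      fun t ht => ?_).trans ?_)
    · have htS := Finset.filter_subset _ _ ht
      rw [abs_mul, abs_of_nonneg (hw.nonneg n t htS)]
      exact mul_le_mul (hwη t htS) (hB t htS) (abs_nonneg _) hη
    · rw [nsmul_eq_mul]
      exact mul_le_mul_of_nonneg_right (by exact_mod_cast card_filter_dist_lt_le (S n) s L)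
        (by positivity)
  · rw [Finset.sum_filter]
    simp_rw [← mul_ite_zero]
    refine hw.abs_sum_mul_le hδ fun t ht => ?_
    split_ifs with hlt
    · rwa [abs_zero]
    · exact hfar t ht (not_lt.1 hlt)

lemma tendsto_sum_sum_mul (hw : NegligibleWeights S w) {κ : ℕ → ℕ → ℕ → ℝ} {B : ℝ}
    (hB : ∀ n, ∀ s ∈ S n, ∀ t ∈ S n, |κ n s t| ≤ B)
    (hfar : ∀ δ > 0, ∃ L, ∀ n, ∀ s ∈ S n, ∀ t ∈ S n, L ≤ Nat.dist s t → |κ n s t| ≤ δ) :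
    Tendsto (fun n => ∑ s ∈ S n, w n s * ∑ t ∈ S n, w n t * κ n s t) atTop (nhds 0) := by
  refine Metric.tendsto_nhds.2 fun δ hδ => ?_
  obtain ⟨L, hL⟩ := hfar (δ / 3) (by positivity)
  set η := δ / (3 * ((2 * L + 1) * (|B| + 1))) with hη
  have hnear : (2 * L + 1) * (η * (|B| + 1)) = δ / 3 := by rw [hη]; field_simp
  filter_upwards [hw.eventually_le η (by positivity)] with n hn
  rw [Real.dist_eq, sub_zero]
  refine (hw.abs_sum_mul_le (B := δ / 3 + δ / 3) (by positivity) fun s hs => ?_).trans_lt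
    (by linarith)
  calc |∑ t ∈ S n, w n t * κ n s t| ≤ (2 * L + 1) * (η * (|B| + 1)) + δ / 3 :=
        hw.abs_sum_mul_le_of_far (by positivity) (by positivity) (by positivity) hn
          (fun t ht => by linarith [hB n s hs t ht, le_abs_self B]) (hL n s hs)
    _ = δ / 3 + δ / 3 := by rw [hnear]

end NegligibleWeights

lemma integral_abs_sub_integral_le_sqrt_variance {Ω : Type*} [MeasurableSpace Ω] {μ : Measure Ω}
    [IsProbabilityMeasure μ] {Y : Ω → ℝ} (hY : MemLp Y 2 μ) :
    ∫ ω, |Y ω - μ[Y]| ∂μ ≤ √Var[Y; μ] := by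
  have hYc : MemLp (fun ω => |Y ω - μ[Y]|) 2 μ := (hY.sub (memLp_const _)).abs
  have hvar := variance_nonneg (fun ω => |Y ω - μ[Y]|) μ
  rw [variance_eq_sub hYc] at hvar
  refine Real.le_sqrt_of_sq_le ?_
  rw [variance_eq_integral hY.aestronglyMeasurable.aemeasurable]
  simpa using hvar

/-- `X` is a function of the window `ε_{t-h},…,ε_t` of the `n`-th row, encoded as measurability
with respect to both the past of `t` and the future of `t - h`. -/
def WindowMeasurable {Ω : Type*} (ε : ℕ → ℕ → Ω → ℝ) (n h t : ℕ) (X : Ω → ℝ) : Prop :=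
  Measurable[pastField ε n t] X ∧ Measurable[futureField ε n (t - h)] X

lemma WindowMeasurable.comp {Ω : Type*} {ε : ℕ → ℕ → Ω → ℝ} {n h t : ℕ} {X : Ω → ℝ}
    {f : ℝ → ℝ} (hf : Measurable f) (hX : WindowMeasurable ε n h t X) :
    WindowMeasurable ε n h t fun ω => f (X ω) :=
  ⟨hf.comp hX.1, hf.comp hX.2⟩

variable {Ω : Type*} [MeasurableSpace Ω] {μ : Measure Ω} {ε : ℕ → ℕ → Ω → ℝ}

lemma WindowMeasurable.measurable {n h t : ℕ} {X : Ω → ℝ} (hX : WindowMeasurable ε n h t X)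
    (hε : ∀ n t, Measurable (ε n t)) : Measurable X :=
  hX.1.mono (pastField_le hε n t) le_rfl

variable [IsProbabilityMeasure μ]

lemma abs_covariance_le_alphaMix_of_le (hε : ∀ n t, Measurable (ε n t)) {n h s t : ℕ} {M : ℝ}
    (hM : 0 ≤ M) {X Y : Ω → ℝ} (hst : s + h ≤ t)
    (hX : WindowMeasurable ε n h s X) (hY : WindowMeasurable ε n h t Y)
    (hXM : ∀ ω, |X ω| ≤ M) (hYM : ∀ ω, |Y ω| ≤ M) :
    |cov[X, Y; μ]| ≤ 4 * M ^ 2 * alphaMix μ ε (t - s - h) := by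
  have hgap : t - h = s + (t - s - h) := by omega
  exact abs_covariance_le_of_bounded (pastField_le hε n s) (futureField_le hε n (t - h))
    hX.1 hY.2 hXM hYM hM fun A B hA hB => le_alphaMix n s _ hA (hgap ▸ hB)

lemma abs_covariance_le_alphaMix_dist (hε : ∀ n t, Measurable (ε n t)) {n h s t : ℕ} {M : ℝ}
    (hM : 0 ≤ M) {X Y : Ω → ℝ} (hst : h ≤ Nat.dist s t)
    (hX : WindowMeasurable ε n h s X) (hY : WindowMeasurable ε n h t Y)
    (hXM : ∀ ω, |X ω| ≤ M) (hYM : ∀ ω, |Y ω| ≤ M) :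
    |cov[X, Y; μ]| ≤ 4 * M ^ 2 * alphaMix μ ε (Nat.dist s t - h) := by
  rcases le_total s t with hle | hle
  · rw [Nat.dist_eq_sub_of_le hle] at hst ⊢
    exact abs_covariance_le_alphaMix_of_le hε hM (by omega) hX hY hXM hYM
  · rw [Nat.dist_eq_sub_of_le_right hle] at hst ⊢
    rw [covariance_comm]
    exact abs_covariance_le_alphaMix_of_le hε hM (by omega) hY hX hYM hXM

lemma abs_covariance_le_four_mul_sq {M : ℝ} {X Y : Ω → ℝ} (hX : Measurable X) (hY : Measurable Y)
    (hXM : ∀ ω, |X ω| ≤ M) (hYM : ∀ ω, |Y ω| ≤ M) (hM : 0 ≤ M) :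
    |cov[X, Y; μ]| ≤ 4 * M ^ 2 := by
  simpa using abs_covariance_le_of_bounded (μ := μ) (le_refl _) (le_refl _) hX hY hXM hYM hM
    fun A B _ _ => abs_measureReal_inter_sub_mul_le_one A B

section

variable {S : ℕ → Finset ℕ} {w : ℕ → ℕ → ℝ} {X : ℕ → ℕ → Ω → ℝ} {h : ℕ}

lemma NegligibleWeights.tendsto_variance_sum (hw : NegligibleWeights S w)
    (hε : ∀ n t, Measurable (ε n t)) (hα : Tendsto (alphaMix μ ε) atTop (nhds 0)) {M : ℝ}
    (hX : ∀ n, ∀ t ∈ S n, WindowMeasurable ε n h t (X n t))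
    (hXM : ∀ n, ∀ t ∈ S n, ∀ ω, |X n t ω| ≤ M) (hM : 0 ≤ M) :
    Tendsto (fun n => Var[fun ω => ∑ t ∈ S n, w n t * X n t ω; μ]) atTop (nhds 0) := by
  have hvar : ∀ n, Var[fun ω => ∑ t ∈ S n, w n t * X n t ω; μ]
      = ∑ s ∈ S n, w n s * ∑ t ∈ S n, w n t * cov[X n s, X n t; μ] := fun n => by
    have hL2 : ∀ t ∈ S n, MemLp (fun ω => w n t * X n t ω) 2 μ := fun t ht =>
      (MemLp.of_bound ((hX n t ht).measurable hε).aestronglyMeasurable M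
        (ae_of_all _ (hXM n t ht))).const_mul _
    rw [← covariance_self (Finset.aemeasurable_fun_sum _ fun t ht => (hL2 t ht).1.aemeasurable),
      covariance_fun_sum_fun_sum' hL2 hL2]
    simp_rw [covariance_const_mul_left, covariance_const_mul_right, Finset.mul_sum]
  simp_rw [hvar]
  refine hw.tendsto_sum_sum_mul (B := 4 * M ^ 2) (fun n s hs t ht =>
    abs_covariance_le_four_mul_sq ((hX n s hs).measurable hε) ((hX n t ht).measurable hε)
      (hXM n s hs) (hXM n t ht) hM) fun δ hδ => ?_
  have hdecay : Tendsto (fun k => 4 * M ^ 2 * alphaMix μ ε k) atTop (nhds 0) := by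
    simpa using hα.const_mul (4 * M ^ 2)
  obtain ⟨L, hL⟩ := eventually_atTop.1 (hdecay.eventually_le_const hδ)
  refine ⟨L + h, fun n s hs t ht hst => ?_⟩
  exact (abs_covariance_le_alphaMix_dist hε hM (by omega) (hX n s hs) (hX n t ht)
    (hXM n s hs) (hXM n t ht)).trans (hL _ (by omega))

lemma NegligibleWeights.tendsto_integral_abs_of_bounded (hw : NegligibleWeights S w)
    (hε : ∀ n t, Measurable (ε n t)) (hα : Tendsto (alphaMix μ ε) atTop (nhds 0)) {M : ℝ}
    (hX : ∀ n, ∀ t ∈ S n, WindowMeasurable ε n h t (X n t))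
    (hXM : ∀ n, ∀ t ∈ S n, ∀ ω, |X n t ω| ≤ M) (hM : 0 ≤ M) :
    Tendsto (fun n => ∫ ω, |∑ t ∈ S n, w n t * (X n t ω - μ[X n t])| ∂μ) atTop (nhds 0) := by
  have hsqrt := (hw.tendsto_variance_sum hε hα hX hXM hM).sqrt
  rw [Real.sqrt_zero] at hsqrt
  refine squeeze_zero (fun n => integral_nonneg fun ω => abs_nonneg _) (fun n => ?_) hsqrt
  have hL2 : ∀ t ∈ S n, MemLp (fun ω => w n t * X n t ω) 2 μ := fun t ht =>
    (MemLp.of_bound ((hX n t ht).measurable hε).aestronglyMeasurable M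
      (ae_of_all _ (hXM n t ht))).const_mul _
  refine (integral_congr_ae (ae_of_all _ fun ω => ?_)).trans_le
    (integral_abs_sub_integral_le_sqrt_variance (memLp_finsetSum _ hL2))
  rw [integral_finsetSum _ fun t ht => (hL2 t ht).integrable one_le_two,
    ← Finset.sum_sub_distrib]
  simp_rw [integral_const_mul, mul_sub]

end

lemma abs_sub_clamp_le {ν M : ℝ} (hν : 0 < ν) (hM : 0 < M) (x : ℝ) :
    |x - max (-M) (min x M)| ≤ |x| ^ (1 + ν) * (M ^ ν)⁻¹ := by
  rcases le_total |x| M with hle | hle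
  · have hbounds := abs_le.1 hle
    rw [min_eq_left hbounds.2, max_eq_right hbounds.1, sub_self, abs_zero]
    positivity
  have hx : 0 < |x| := hM.trans_le hle
  calc |x - max (-M) (min x M)| ≤ |x| := by
        rcases abs_cases x with ⟨habs, -⟩ | ⟨habs, -⟩ <;>
          rcases max_cases (-M) (min x M) with h | h <;>
          rcases min_cases x M with h' | h' <;> rw [abs_le] <;> constructor <;> linarith
    _ = |x| ^ (1 + ν) * (|x| ^ ν)⁻¹ := by
        rw [Real.rpow_add hx, Real.rpow_one, mul_assoc,
          mul_inv_cancel₀ (Real.rpow_pos_of_pos hx ν).ne', mul_one]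
    _ ≤ |x| ^ (1 + ν) * (M ^ ν)⁻¹ := by gcongr

lemma le_add_rpow_mul_inv {ν M : ℝ} (hν : 0 < ν) (hM : 0 < M) {x : ℝ} (hx : 0 ≤ x) :
    x ≤ M + x ^ (1 + ν) * (M ^ ν)⁻¹ := by
  have hclamp := abs_sub_clamp_le hν hM x
  rw [abs_of_nonneg hx] at hclamp
  have hle : max (-M) (min x M) ≤ M := max_le (by linarith) (min_le_right _ _)
  linarith [le_abs_self (x - max (-M) (min x M))]

lemma tendsto_zero_of_le_add_mul_inv_rpow {ν C : ℝ} (hν : 0 < ν) {a : ℕ → ℝ} {d : ℝ → ℕ → ℝ}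
    (ha : ∀ n, 0 ≤ a n) (hd : ∀ M > 0, Tendsto (d M) atTop (nhds 0))
    (had : ∀ M > 0, ∀ᶠ n in atTop, a n ≤ d M n + C * (M ^ ν)⁻¹) :
    Tendsto a atTop (nhds 0) := by
  refine Metric.tendsto_nhds.2 fun δ hδ => ?_
  have htail : Tendsto (fun M : ℝ => C * (M ^ ν)⁻¹) atTop (nhds 0) := by
    simpa using (tendsto_rpow_atTop hν).inv_tendsto_atTop.const_mul C
  obtain ⟨M, hMδ, hM⟩ :=
    ((htail.eventually_lt_const (half_pos hδ)).and (eventually_gt_atTop 0)).exists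
  filter_upwards [had M hM, (hd M hM).eventually_lt_const (half_pos hδ)] with n hn hdn
  rw [Real.dist_eq, sub_zero, abs_of_nonneg (ha n)]
  linarith

lemma integrable_of_integrable_abs_rpow {ν : ℝ} (hν : 0 < ν) {X : Ω → ℝ} (hX : Measurable X)
    (hi : Integrable (fun ω => |X ω| ^ (1 + ν)) μ) : Integrable X μ := by
  refine ((integrable_const (1 : ℝ)).add hi).mono' hX.aestronglyMeasurable
    (ae_of_all _ fun ω => ?_)
  simpa using le_add_rpow_mul_inv hν one_pos (abs_nonneg (X ω))

section

variable {S : ℕ → Finset ℕ} {w : ℕ → ℕ → ℝ} {X : ℕ → ℕ → Ω → ℝ} {h : ℕ}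

lemma NegligibleWeights.integral_abs_sum_sub_le (hw : NegligibleWeights S w) {n : ℕ} {B : ℝ}
    (hB : 0 ≤ B) {Y : ℕ → Ω → ℝ} (hY : ∀ t ∈ S n, Integrable (Y t) μ)
    (hYB : ∀ t ∈ S n, ∫ ω, |Y t ω| ∂μ ≤ B) :
    ∫ ω, |∑ t ∈ S n, w n t * (Y t ω - μ[Y t])| ∂μ ≤ 2 * B := by
  have hYc : ∀ t ∈ S n, Integrable (fun ω => Y t ω - μ[Y t]) μ := fun t ht =>
    (hY t ht).sub (integrable_const _)
  have hcentred : ∀ t ∈ S n, ∫ ω, |Y t ω - μ[Y t]| ∂μ ≤ 2 * B := fun t ht =>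
    calc ∫ ω, |Y t ω - μ[Y t]| ∂μ ≤ ∫ ω, (|Y t ω| + |μ[Y t]|) ∂μ :=
          integral_mono (hYc t ht).abs ((hY t ht).abs.add (integrable_const _))
            fun ω => abs_sub _ _
      _ = ∫ ω, |Y t ω| ∂μ + |μ[Y t]| := by
          rw [integral_add (hY t ht).abs (integrable_const _)]; simp
      _ ≤ 2 * B := by linarith [hYB t ht, abs_integral_le_integral_abs (f := Y t) (μ := μ)]
  calc ∫ ω, |∑ t ∈ S n, w n t * (Y t ω - μ[Y t])| ∂μ
      ≤ ∫ ω, ∑ t ∈ S n, w n t * |Y t ω - μ[Y t]| ∂μ := by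
        refine integral_mono (integrable_finsetSum _ fun t ht => (hYc t ht).const_mul _).abs
          (integrable_finsetSum _ fun t ht => (hYc t ht).abs.const_mul _) fun ω => ?_
        refine (Finset.abs_sum_le_sum_abs _ _).trans_eq (Finset.sum_congr rfl fun t ht => ?_)
        rw [abs_mul, abs_of_nonneg (hw.nonneg n t ht)]
    _ = ∑ t ∈ S n, w n t * ∫ ω, |Y t ω - μ[Y t]| ∂μ := by
        rw [integral_finsetSum _ fun t ht => (hYc t ht).abs.const_mul _]
        simp_rw [integral_const_mul]
    _ ≤ 2 * B := hw.sum_mul_le (by positivity) hcentred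

lemma NegligibleWeights.integral_abs_sum_sub_le_add (hw : NegligibleWeights S w) {n : ℕ} {B : ℝ}
    (hB : 0 ≤ B) {Y Z : ℕ → Ω → ℝ} (hY : ∀ t ∈ S n, Integrable (Y t) μ)
    (hZ : ∀ t ∈ S n, Integrable (Z t) μ) (hYZ : ∀ t ∈ S n, ∫ ω, |Y t ω - Z t ω| ∂μ ≤ B) :
    ∫ ω, |∑ t ∈ S n, w n t * (Y t ω - μ[Y t])| ∂μ
      ≤ ∫ ω, |∑ t ∈ S n, w n t * (Z t ω - μ[Z t])| ∂μ + 2 * B := by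
  have hdiff := hw.integral_abs_sum_sub_le hB (fun t ht => (hY t ht).sub (hZ t ht)) hYZ
  have hint : ∀ {X : ℕ → Ω → ℝ}, (∀ t ∈ S n, Integrable (X t) μ) →
      Integrable (fun ω => |∑ t ∈ S n, w n t * (X t ω - μ[X t])|) μ := fun hX =>
    (integrable_finsetSum _ fun t ht => ((hX t ht).sub (integrable_const _)).const_mul _).abs
  have hYZi := hint fun t ht => (hY t ht).sub (hZ t ht)
  refine le_trans ?_ (add_le_add_right hdiff _)
  rw [← integral_add (hint hZ) hYZi]
  refine integral_mono (hint hY) ((hint hZ).add hYZi) fun ω => ?_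
  refine (congrArg abs ?_).trans_le (abs_add_le _ _)
  rw [← Finset.sum_add_distrib]
  refine Finset.sum_congr rfl fun t ht => ?_
  simp only [Pi.sub_apply]
  rw [integral_sub (hY t ht) (hZ t ht)]
  ring

theorem NegligibleWeights.tendsto_integral_abs (hw : NegligibleWeights S w)
    (hε : ∀ n t, Measurable (ε n t)) (hα : Tendsto (alphaMix μ ε) atTop (nhds 0)) {ν C : ℝ}
    (hν : 0 < ν) (hC : 0 ≤ C) (hX : ∀ n, ∀ t ∈ S n, WindowMeasurable ε n h t (X n t))
    (hXi : ∀ n, ∀ t ∈ S n, Integrable (fun ω => |X n t ω| ^ (1 + ν)) μ)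
    (hXC : ∀ n, ∀ t ∈ S n, ∫ ω, |X n t ω| ^ (1 + ν) ∂μ ≤ C) :
    Tendsto (fun n => ∫ ω, |∑ t ∈ S n, w n t * (X n t ω - μ[X n t])| ∂μ) atTop (nhds 0) := by
  let T (M x : ℝ) : ℝ := max (-M) (min x M)
  have hT : ∀ M, Measurable (T M) := fun M => by fun_prop
  have hTM : ∀ M > 0, ∀ x, |T M x| ≤ M := fun M hM x =>
    abs_le.2 ⟨le_max_left _ _, max_le (by linarith) (min_le_right _ _)⟩
  have hXi₁ : ∀ n, ∀ t ∈ S n, Integrable (X n t) μ := fun n t ht =>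
    integrable_of_integrable_abs_rpow hν ((hX n t ht).measurable hε) (hXi n t ht)
  have hTi : ∀ M > 0, ∀ n, ∀ t ∈ S n, Integrable (fun ω => T M (X n t ω)) μ :=
    fun M hM n t ht => .of_bound ((hT M).comp ((hX n t ht).measurable hε)).aestronglyMeasurable
      M (ae_of_all _ fun ω => hTM M hM _)
  have hrest : ∀ M > 0, ∀ n, ∀ t ∈ S n,
      ∫ ω, |X n t ω - T M (X n t ω)| ∂μ ≤ C * (M ^ ν)⁻¹ := fun M hM n t ht =>
    calc ∫ ω, |X n t ω - T M (X n t ω)| ∂μ ≤ ∫ ω, |X n t ω| ^ (1 + ν) * (M ^ ν)⁻¹ ∂μ :=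
          integral_mono ((hXi₁ n t ht).sub (hTi M hM n t ht)).abs ((hXi n t ht).mul_const _)
            fun ω => abs_sub_clamp_le hν hM _
      _ ≤ C * (M ^ ν)⁻¹ := by
          rw [integral_mul_const]
          exact mul_le_mul_of_nonneg_right (hXC n t ht) (by positivity)
  refine tendsto_zero_of_le_add_mul_inv_rpow (C := 2 * C) hν
    (fun n => integral_nonneg fun ω => abs_nonneg _)
    (fun M hM => hw.tendsto_integral_abs_of_bounded hε hα
      (fun n t ht => (hX n t ht).comp (hT M)) (fun n t _ ω => hTM M hM _) hM.le)
    fun M hM => .of_forall fun n => ?_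
  rw [mul_assoc]
  exact hw.integral_abs_sum_sub_le_add (by positivity) (hXi₁ n) (hTi M hM n) (hrest M hM n)

end

end WeakLaw

section Averages

lemma div_mem_Ioc {n t : ℕ} (h₁ : 1 ≤ t) (hn : t ≤ n) : (t : ℝ) / n ∈ Ioc (0 : ℝ) 1 := by
  have hn₀ : (0 : ℝ) < n := by exact_mod_cast h₁.trans hn
  exact ⟨by positivity, (div_le_one hn₀).2 (by exact_mod_cast hn)⟩

lemma tendsto_natCeil_mul_atTop {x : ℝ} (hx : 0 < x) :
    Tendsto (fun n : ℕ => ⌈x * n⌉₊) atTop atTop :=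
  tendsto_nat_ceil_atTop.comp (tendsto_natCast_atTop_atTop.const_mul_atTop hx)

lemma tendsto_natCeil_mul_div {x : ℝ} (hx : 0 ≤ x) :
    Tendsto (fun n : ℕ => (⌈x * n⌉₊ : ℝ) / n) atTop (nhds x) :=
  (tendsto_nat_ceil_mul_div_atTop hx).comp tendsto_natCast_atTop_atTop

lemma tendsto_natCeil_mul_sub_div {x : ℝ} (hx : 0 < x) (h : ℕ) :
    Tendsto (fun n : ℕ => ((⌈x * n⌉₊ - h : ℕ) : ℝ) / n) atTop (nhds x) := by
  have hsub := (tendsto_natCeil_mul_div hx.le).sub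
    (tendsto_const_div_atTop_nhds_zero_nat (h : ℝ))
  rw [sub_zero] at hsub
  refine hsub.congr' ?_
  filter_upwards [(tendsto_natCeil_mul_atTop hx).eventually_ge_atTop h] with n hn
  rw [Nat.cast_sub hn, sub_div]

lemma natCeil_mul_le {x : ℝ} (hx : x ≤ 1) (n : ℕ) : ⌈x * n⌉₊ ≤ n :=
  Nat.ceil_le.2 (mul_le_of_le_one_left n.cast_nonneg hx)

lemma eventually_natCeil_mul_mem_Icc {x : ℝ} (hx : x ∈ Ioc (0 : ℝ) 1) (h : ℕ) :
    ∀ᶠ n : ℕ in atTop, ⌈x * n⌉₊ ∈ Finset.Icc (h + 1) n := by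
  filter_upwards [(tendsto_natCeil_mul_atTop hx.1).eventually_ge_atTop (h + 1)] with n hn
  exact Finset.mem_Icc.2 ⟨hn, natCeil_mul_le hx.2 n⟩

lemma natCeil_eq_of_mem_uIoc {k : ℕ} {x : ℝ} (hx : x ∈ uIoc (k : ℝ) (k + 1 : ℕ)) :
    ⌈x⌉₊ = k + 1 := by
  rw [uIoc_of_le (by simp)] at hx
  exact (Nat.ceil_eq_iff k.succ_ne_zero).2 (by simpa using hx)

lemma integral_comp_natCeil (f : ℕ → ℝ) (k : ℕ) :
    ∫ x in (k : ℝ)..(k + 1 : ℕ), f ⌈x⌉₊ = f (k + 1) := by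
  rw [intervalIntegral.integral_congr_ae (g := fun _ => f (k + 1))
    (ae_of_all _ fun x hx => congrArg f (natCeil_eq_of_mem_uIoc hx))]
  simp

lemma intervalIntegrable_comp_natCeil (f : ℕ → ℝ) (k : ℕ) :
    IntervalIntegrable (fun x : ℝ => f ⌈x⌉₊) volume k (k + 1 : ℕ) :=
  (intervalIntegrable_const (c := f (k + 1))).congr fun _ hx =>
    (congrArg f (natCeil_eq_of_mem_uIoc hx)).symm

lemma inv_mul_sum_Icc_eq_integral (f : ℕ → ℝ) {n : ℕ} (hn : n ≠ 0) :
    (n : ℝ)⁻¹ * ∑ t ∈ Finset.Icc 1 n, f t = ∫ x in (0 : ℝ)..1, f ⌈x * n⌉₊ := by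
  have hsum := intervalIntegral.sum_integral_adjacent_intervals (μ := volume)
    (f := fun x : ℝ => f ⌈x⌉₊) (a := fun k : ℕ => (k : ℝ)) (n := n)
    fun k _ => intervalIntegrable_comp_natCeil f k
  simp_rw [integral_comp_natCeil] at hsum
  rw [intervalIntegral.integral_comp_mul_right (fun x => f ⌈x⌉₊) (Nat.cast_ne_zero.2 hn),
    zero_mul, one_mul, smul_eq_mul]
  rw [Nat.cast_zero] at hsum
  rw [← hsum, Finset.range_eq_Ico, Finset.sum_Ico_add' f, zero_add,
    Finset.Ico_add_one_right_eq_Icc]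

lemma tendsto_average {h : ℕ} {F : ℕ → ℕ → ℝ} {f : ℝ → ℝ} {B : ℝ} (hB : 0 ≤ B)
    (hFB : ∀ n, ∀ t ∈ Finset.Icc (h + 1) n, |F n t| ≤ B)
    (hF : ∀ᵐ x : ℝ, x ∈ Ioc (0 : ℝ) 1 → Tendsto (fun n => F n ⌈x * n⌉₊) atTop (nhds (f x))) :
    Tendsto (fun n : ℕ => (n : ℝ)⁻¹ * ∑ t ∈ Finset.Icc (h + 1) n, F n t) atTop
      (nhds (∫ x in (0 : ℝ)..1, f x)) := by
  let G (n t : ℕ) : ℝ := if t ∈ Finset.Icc (h + 1) n then F n t else 0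
  have hsum : ∀ n : ℕ, n ≠ 0 → (n : ℝ)⁻¹ * ∑ t ∈ Finset.Icc (h + 1) n, F n t
      = ∫ x in (0 : ℝ)..1, G n ⌈x * n⌉₊ := fun n hn => by
    rw [← inv_mul_sum_Icc_eq_integral (G n) hn, Finset.sum_ite_mem,
      Finset.inter_eq_right.2 (Finset.Icc_subset_Icc_left (Nat.le_add_left 1 h))]
  refine Tendsto.congr' ((eventually_ne_atTop 0).mono fun n hn => (hsum n hn).symm) ?_
  refine intervalIntegral.tendsto_integral_filter_of_dominated_convergence (fun _ => B)
    (.of_forall fun n => ?_) (.of_forall fun n => ae_of_all _ fun x _ => ?_)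
    intervalIntegrable_const ?_
  · exact ((measurable_from_nat (f := G n)).comp
      (Nat.measurable_ceil.comp (measurable_id.mul_const _))).aestronglyMeasurable
  · simp only [G, Real.norm_eq_abs]
    split_ifs with ht
    exacts [hFB n _ ht, abs_zero.trans_le hB]
  · rw [uIoc_of_le zero_le_one]
    filter_upwards [hF] with x hx hx₀₁
    refine (hx hx₀₁).congr' ?_
    filter_upwards [eventually_natCeil_mul_mem_Icc hx₀₁ h] with n hn
    exact (if_pos hn).symm

lemma mem_nhds_of_ordConnected {I : Set ℝ} (hI : I.OrdConnected)
    (hb : Bornology.IsBounded I) {x : ℝ} (hx : x ∈ I) (hinf : x ≠ sInf I) (hsup : x ≠ sSup I) :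
    I ∈ nhds x := by
  obtain ⟨y, hy, hyx⟩ := exists_lt_of_csInf_lt ⟨x, hx⟩ ((csInf_le hb.bddBelow hx).lt_of_ne' hinf)
  obtain ⟨z, hz, hxz⟩ := exists_lt_of_lt_csSup ⟨x, hx⟩ ((le_csSup hb.bddAbove hx).lt_of_ne hsup)
  exact Filter.mem_of_superset (Ioo_mem_nhds hyx hxz) fun u hu => hI.out hy hz ⟨hu.1.le, hu.2.le⟩

lemma PiecewiseLipschitzOn01.ae_continuousAt {f : ℝ → ℝ} (hf : PiecewiseLipschitzOn01 f) :
    ∀ᵐ x : ℝ, x ∈ Ioc (0 : ℝ) 1 → ContinuousAt f x := by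
  obtain ⟨p, I, C, hI, -, hcover, hlip⟩ := hf
  have hnull : volume (⋃ l, {sInf (I l), sSup (I l)} : Set ℝ) = 0 :=
    ((Set.finite_iUnion fun l => Set.toFinite _).measure_zero _)
  filter_upwards [measure_eq_zero_iff_ae_notMem.1 hnull] with x hx hx₀₁
  obtain ⟨l, hl⟩ := mem_iUnion.1 (hcover ▸ hx₀₁)
  simp only [mem_iUnion, mem_insert_iff, mem_singleton_iff, not_exists, not_or] at hx
  have hIb : Bornology.IsBounded (I l) :=
    (Metric.isBounded_Ioc 0 1).subset (hcover ▸ subset_iUnion I l)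
  exact (hlip l).continuousOn.continuousAt
    (mem_nhds_of_ordConnected (hI l) hIb hl (hx l).1 (hx l).2)

lemma intervalIntegrable_of_ae_continuousAt {f : ℝ → ℝ} {a b B : ℝ}
    (hB : ∀ x ∈ uIoc a b, |f x| ≤ B) (hf : ∀ᵐ x : ℝ, x ∈ uIoc a b → ContinuousAt f x) :
    IntervalIntegrable f volume a b := by
  have hmeas : AEStronglyMeasurable f (volume.restrict {x | ContinuousAt f x}) :=
    ContinuousOn.aestronglyMeasurable (fun x hx => ContinuousAt.continuousWithinAt hx)
      (IsGδ.setOfPred_continuousAt f).measurableSet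
  refine intervalIntegrable_iff.2 (IntegrableOn.of_bound (C := B) measure_Ioc_lt_top
    (hmeas.mono_measure (Measure.restrict_mono_ae hf)) ?_)
  exact (ae_restrict_iff' measurableSet_uIoc).2 (ae_of_all _ hB)

end Averages

section KernelWeights

/-- The kernel and bandwidth assumption, with the bandwidth rate expressed as `n bₙ → ∞`. -/
structure KernelBandwidth (K : ℝ → ℝ) (b : ℕ → ℝ) : Prop where
  continuous : Continuous K
  hasCompactSupport : HasCompactSupport K
  nonneg : ∀ z, 0 ≤ K z
  integral_eq_one : ∫ z, K z = 1
  pos : ∀ n, 0 < b n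
  tendsto_zero : Tendsto b atTop (nhds 0)
  tendsto_mul_atTop : Tendsto (fun n : ℕ => n * b n) atTop atTop

lemma tendsto_mul_bandwidth_atTop {b : ℕ → ℝ} (hb : ∀ n, 0 < b n) (hb₀ : Tendsto b atTop (nhds 0))
    (hnb : Tendsto (fun n : ℕ => 1 / ((n : ℝ) * b n ^ 2)) atTop (nhds 0)) :
    Tendsto (fun n : ℕ => n * b n) atTop atTop := by
  have hsq : Tendsto (fun n : ℕ => (n : ℝ) * b n ^ 2) atTop atTop := by
    have hpos : ∀ᶠ n : ℕ in atTop, 1 / ((n : ℝ) * b n ^ 2) ∈ Ioi 0 := by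
      filter_upwards [eventually_gt_atTop 0] with n hn
      have := hb n
      exact mem_Ioi.2 (by positivity)
    refine (tendsto_nhdsWithin_iff.2 ⟨hnb, hpos⟩).inv_tendsto_nhdsGT_zero.congr fun n => ?_
    rw [Pi.inv_apply, one_div, inv_inv]
  refine tendsto_atTop_mono' _ ?_ hsq
  filter_upwards [hb₀.eventually_le_const one_pos] with n hn
  have : b n ^ 2 ≤ b n := pow_le_of_le_one (hb n).le hn two_ne_zero
  gcongr

lemma sub_one_le_card_Ioo_floor_ceil {y z : ℝ} (hy : 0 ≤ y) :
    z - y - 1 ≤ ((Finset.Ioo ⌊y⌋₊ ⌈z⌉₊).card : ℝ) := by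
  have hcard : ⌈z⌉₊ ≤ (Finset.Ioo ⌊y⌋₊ ⌈z⌉₊).card + ⌊y⌋₊ + 1 := by
    rw [Nat.card_Ioo]; omega
  have hcast : (⌈z⌉₊ : ℝ) ≤ (Finset.Ioo ⌊y⌋₊ ⌈z⌉₊).card + ⌊y⌋₊ + 1 := by exact_mod_cast hcard
  linarith [Nat.le_ceil z, Nat.floor_le hy]

namespace KernelBandwidth

variable {K : ℝ → ℝ} {b : ℕ → ℝ}

lemma exists_le_on_Ioo (H : KernelBandwidth K b) :
    ∃ κ > 0, ∃ p q : ℝ, p < q ∧ ∀ z ∈ Ioo p q, z ≠ 0 ∧ κ ≤ K z := by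
  obtain ⟨z₀, hz₀⟩ : ∃ z, 0 < K z := by
    by_contra! hneg
    have hK : K = 0 := funext fun z => (hneg z).antisymm (H.nonneg z)
    simpa [hK] using H.integral_eq_one
  have hopen : IsOpen {z | K z₀ / 2 < K z} := isOpen_lt continuous_const H.continuous
  obtain ⟨z₁, hz₁⟩ := (dense_compl_singleton (0 : ℝ)).inter_open_nonempty _ hopen
    ⟨z₀, half_lt_self hz₀⟩
  obtain ⟨p, q, hpq, hsub⟩ := mem_nhds_iff_exists_Ioo_subset.1
    ((hopen.inter isOpen_compl_singleton).mem_nhds hz₁)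
  exact ⟨K z₀ / 2, by positivity, p, q, hpq.1.trans hpq.2, fun z hz =>
    ⟨(hsub hz).2, (hsub hz).1.le⟩⟩

lemma exists_le (H : KernelBandwidth K b) : ∃ R, 0 ≤ R ∧ ∀ z, K z ≤ R := by
  obtain ⟨R, hR⟩ := H.hasCompactSupport.exists_bound_of_continuous H.continuous
  exact ⟨R, (norm_nonneg _).trans (hR 0), fun z => (le_abs_self _).trans (hR z)⟩

lemma exists_abs_le_of_ne_zero (H : KernelBandwidth K b) : ∃ S, ∀ z, K z ≠ 0 → |z| ≤ S := by
  obtain ⟨S, hS⟩ := H.hasCompactSupport.isCompact.isBounded.exists_norm_le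
  exact ⟨S, fun z hz => hS z (subset_tsupport K hz)⟩

lemma Kw_nonneg (H : KernelBandwidth K b) (n t i : ℕ) : 0 ≤ Kw K b n t i := by
  unfold Kw
  split_ifs
  exacts [le_rfl, H.nonneg _]

lemma wgt_nonneg (H : KernelBandwidth K b) (n t j : ℕ) : 0 ≤ wgt K b n t j :=
  div_nonneg (H.Kw_nonneg n t j) (Finset.sum_nonneg fun _ _ => H.Kw_nonneg _ _ _)

lemma sum_wgt_le_one (H : KernelBandwidth K b) (n h t : ℕ) :
    ∑ j ∈ Finset.Icc (h + 1) n, wgt K b n t j ≤ 1 := by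
  refine (Finset.sum_le_sum_of_subset_of_nonneg (Finset.Icc_subset_Icc_left (Nat.le_add_left 1 h))
    fun j _ _ => H.wgt_nonneg n t j).trans ?_
  simp_rw [wgt, ← Finset.sum_div]
  exact div_self_le_one _

lemma le_sum_Kw (H : KernelBandwidth K b) {n t : ℕ} {κ p q : ℝ} (hκ : 0 ≤ κ)
    (hK : ∀ z ∈ Ioo p q, z ≠ 0 ∧ κ ≤ K z) (hN : 0 < n * b n) (hq : 0 ≤ t - q * (n * b n))
    (hp : t - p * (n * b n) ≤ n) :
    κ * ((q - p) * (n * b n) - 1) ≤ ∑ i ∈ Finset.Icc 1 n, Kw K b n t i := by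
  set N : ℝ := n * b n
  let S := Finset.Ioo ⌊t - q * N⌋₊ ⌈t - p * N⌉₊
  have hS : ∀ i ∈ S, κ ≤ Kw K b n t i := fun i hi => by
    rw [Finset.mem_Ioo, Nat.floor_lt hq, Nat.lt_ceil] at hi
    have hz : ((t : ℝ) - i) / N ∈ Ioo p q := by
      rw [mem_Ioo, lt_div_iff₀ hN, div_lt_iff₀ hN]
      constructor <;> linarith
    have hti : t ≠ i := by
      rintro rfl
      exact (hK _ hz).1 (by rw [sub_self, zero_div])
    rw [Kw, if_neg hti]
    exact (hK _ hz).2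
  have hsub : S ⊆ Finset.Icc 1 n := fun i hi => by
    rw [Finset.mem_Ioo] at hi
    exact Finset.mem_Icc.2 ⟨by omega, (hi.2.trans_le (Nat.ceil_le.2 hp)).le⟩
  calc κ * ((q - p) * N - 1) ≤ κ * S.card :=
        mul_le_mul_of_nonneg_left (by linarith [sub_one_le_card_Ioo_floor_ceil (z := t - p * N) hq])
          hκ
    _ ≤ ∑ i ∈ S, Kw K b n t i := by
        rw [mul_comm, ← nsmul_eq_mul]
        exact Finset.card_nsmul_le_sum _ _ _ hS
    _ ≤ ∑ i ∈ Finset.Icc 1 n, Kw K b n t i :=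
        Finset.sum_le_sum_of_subset_of_nonneg hsub fun i _ _ => H.Kw_nonneg n t i

section

variable {t : ℕ → ℕ} {x : ℝ}

lemma tendsto_sub_mul_bandwidth (H : KernelBandwidth K b)
    (ht : Tendsto (fun n => (t n : ℝ) / n) atTop (nhds x)) (z : ℝ) :
    Tendsto (fun n => (t n : ℝ) / n - z * b n) atTop (nhds x) := by
  simpa using ht.sub (H.tendsto_zero.const_mul z)

lemma tendsto_sum_Kw_atTop (H : KernelBandwidth K b) (hx : x ∈ Ioo (0 : ℝ) 1)
    (ht : Tendsto (fun n => (t n : ℝ) / n) atTop (nhds x)) :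
    Tendsto (fun n => ∑ i ∈ Finset.Icc 1 n, Kw K b n (t n) i) atTop atTop := by
  obtain ⟨κ, hκ, p, q, hpq, hK⟩ := H.exists_le_on_Ioo
  have hbound : Tendsto (fun n : ℕ => κ * ((q - p) * (n * b n) - 1)) atTop atTop :=
    (tendsto_atTop_add_const_right _ _
      (H.tendsto_mul_atTop.const_mul_atTop (sub_pos.2 hpq))).const_mul_atTop hκ
  refine tendsto_atTop_mono' _ ?_ hbound
  filter_upwards [eventually_gt_atTop 0,
    (H.tendsto_sub_mul_bandwidth ht q).eventually_const_le hx.1,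
    (H.tendsto_sub_mul_bandwidth ht p).eventually_le_const hx.2] with n hn hq hp
  have hn₀ : (0 : ℝ) < n := Nat.cast_pos.2 hn
  have hscale : ∀ z, (t n : ℝ) - z * (n * b n) = n * (t n / n - z * b n) := fun z => by
    field_simp
  refine H.le_sum_Kw hκ.le hK (mul_pos hn₀ (H.pos n)) ?_ ?_
  · rw [hscale]
    exact mul_nonneg hn₀.le hq
  · rw [hscale]
    exact mul_le_of_le_one_right hn₀.le hp

lemma negligibleWeights_wgt (H : KernelBandwidth K b) (hx : x ∈ Ioo (0 : ℝ) 1)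
    (ht : Tendsto (fun n => (t n : ℝ) / n) atTop (nhds x)) (h : ℕ) :
    NegligibleWeights (fun n => Finset.Icc (h + 1) n) fun n j => wgt K b n (t n) j where
  nonneg n j _ := H.wgt_nonneg n _ j
  sum_le_one n := H.sum_wgt_le_one n h _
  eventually_le δ hδ := by
    obtain ⟨R, hR₀, hR⟩ := H.exists_le
    have hsmall := (H.tendsto_sum_Kw_atTop hx ht).const_div_atTop R
    filter_upwards [hsmall.eventually_le_const hδ] with n hn j _
    refine le_trans (div_le_div_of_nonneg_right ?_
      (Finset.sum_nonneg fun i _ => H.Kw_nonneg n _ i)) hn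
    unfold Kw
    split_ifs
    exacts [hR₀, hR _]

lemma eventually_mem_of_wgt_ne_zero (H : KernelBandwidth K b)
    (ht : Tendsto (fun n => (t n : ℝ) / n) atTop (nhds x)) {U : Set ℝ} (hU : U ∈ nhds x) :
    ∀ᶠ n : ℕ in atTop, ∀ j, wgt K b n (t n) j ≠ 0 → (j : ℝ) / n ∈ U := by
  obtain ⟨S, hS⟩ := H.exists_abs_le_of_ne_zero
  obtain ⟨p, q, hpq, hsub⟩ := mem_nhds_iff_exists_Ioo_subset.1 hU
  filter_upwards [eventually_gt_atTop 0,
    (H.tendsto_sub_mul_bandwidth ht S).eventually_const_lt hpq.1,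
    (H.tendsto_sub_mul_bandwidth ht (-S)).eventually_lt_const hpq.2] with n hn hp hq j hj
  have hK : K (((t n : ℝ) - j) / (n * b n)) ≠ 0 := fun h₀ => hj (by simp [wgt, Kw, h₀])
  have hz := abs_le.1 (hS _ hK)
  have hb := H.pos n
  have hjz : (j : ℝ) / n = t n / n - (t n - j) / (n * b n) * b n := by
    have hn₀ : (n : ℝ) ≠ 0 := Nat.cast_ne_zero.2 hn.ne'
    field_simp
    ring
  refine hsub ⟨?_, ?_⟩ <;> rw [hjz]
  · exact hp.trans_le (by gcongr; exact hz.2)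
  · exact lt_of_le_of_lt (by gcongr; exact hz.1) hq

lemma eventually_sum_wgt_eq_one (H : KernelBandwidth K b) (hx : x ∈ Ioo (0 : ℝ) 1)
    (ht : Tendsto (fun n => (t n : ℝ) / n) atTop (nhds x)) (h : ℕ) :
    ∀ᶠ n in atTop, ∑ j ∈ Finset.Icc (h + 1) n, wgt K b n (t n) j = 1 := by
  have hh : Tendsto (fun n : ℕ => (h : ℝ) / n) atTop (nhds 0) :=
    tendsto_const_div_atTop_nhds_zero_nat _
  filter_upwards [H.eventually_mem_of_wgt_ne_zero ht (Ioi_mem_nhds (half_lt_self hx.1)),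
    hh.eventually_le_const (half_pos hx.1),
    (H.tendsto_sum_Kw_atTop hx ht).eventually_ne_atTop 0] with n hloc hhn hsum
  rw [Finset.sum_subset (Finset.Icc_subset_Icc_left (Nat.le_add_left 1 h)) fun j hj hjh => ?_]
  · simp_rw [wgt, ← Finset.sum_div]
    exact div_self hsum
  · by_contra hne
    have hjh : j ≤ h := by
      rw [Finset.mem_Icc] at hj hjh
      omega
    refine (hloc j hne).not_ge (le_trans ?_ hhn)
    gcongr

lemma tendsto_sum_wgt_mul (H : KernelBandwidth K b) (hx : x ∈ Ioo (0 : ℝ) 1)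
    (ht : Tendsto (fun n => (t n : ℝ) / n) atTop (nhds x)) (h : ℕ) {f : ℝ → ℝ}
    (hf : ContinuousAt f x) :
    Tendsto (fun n : ℕ => ∑ j ∈ Finset.Icc (h + 1) n, wgt K b n (t n) j * f ((j : ℝ) / n))
      atTop (nhds (f x)) := by
  refine Metric.tendsto_nhds.2 fun δ hδ => ?_
  filter_upwards [H.eventually_sum_wgt_eq_one hx ht h,
    H.eventually_mem_of_wgt_ne_zero ht (hf (Metric.ball_mem_nhds _ (half_pos hδ)))] with n hone hloc
  have hsplit : ∑ j ∈ Finset.Icc (h + 1) n, wgt K b n (t n) j * f ((j : ℝ) / n) - f x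
      = ∑ j ∈ Finset.Icc (h + 1) n, wgt K b n (t n) j * (f ((j : ℝ) / n) - f x) := by
    simp_rw [mul_sub, Finset.sum_sub_distrib, ← Finset.sum_mul, hone, one_mul]
  rw [Real.dist_eq, hsplit]
  refine lt_of_le_of_lt ?_ (half_lt_self hδ)
  calc |∑ j ∈ Finset.Icc (h + 1) n, wgt K b n (t n) j * (f ((j : ℝ) / n) - f x)|
      ≤ ∑ j ∈ Finset.Icc (h + 1) n, wgt K b n (t n) j * (δ / 2) := by
        refine (Finset.abs_sum_le_sum_abs _ _).trans (Finset.sum_le_sum fun j _ => ?_)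
        rw [abs_mul, abs_of_nonneg (H.wgt_nonneg n _ j)]
        by_cases hj : wgt K b n (t n) j = 0
        · simp [hj]
        · exact mul_le_mul_of_nonneg_left (hloc j hj).le (H.wgt_nonneg n _ j)
    _ = δ / 2 := by rw [← Finset.sum_mul, hone, one_mul]

end

end KernelBandwidth

end KernelWeights

section Model

section Indicators

variable {Ω : Type*} {v : ℝ → ℝ} {ε : ℕ → ℕ → Ω → ℝ}

lemma windowMeasurable_prodMk {f : ℝ × ℝ → ℝ} (hf : Measurable f) (n h t : ℕ) :
    WindowMeasurable ε n h t fun ω => f (ε n t ω, ε n (t - h) ω) :=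
  ⟨hf.comp (@Measurable.prodMk _ _ _ _ _ (_) _ _ (measurable_pastField le_rfl)
      (measurable_pastField (Nat.sub_le t h))),
    hf.comp (@Measurable.prodMk _ _ _ _ _ (_) _ _ (measurable_futureField (Nat.sub_le t h))
      (measurable_futureField le_rfl))⟩

lemma aproc_eq_zero_or_one (v : ℝ → ℝ) (ε : ℕ → ℕ → Ω → ℝ) (n t : ℕ) (ω : Ω) :
    aproc v ε n t ω = 0 ∨ aproc v ε n t ω = 1 := by
  unfold aproc; split_ifs <;> simp

lemma aproc_mem_Icc (n t : ℕ) (ω : Ω) : aproc v ε n t ω ∈ Icc (0 : ℝ) 1 := by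
  rcases aproc_eq_zero_or_one v ε n t ω with h | h <;> simp [h]

lemma aproc_mul_self (n t : ℕ) (ω : Ω) : aproc v ε n t ω * aproc v ε n t ω = aproc v ε n t ω := by
  rcases aproc_eq_zero_or_one v ε n t ω with h | h <;> simp [h]

lemma aproc_mul_mem_Icc (n s t : ℕ) (ω : Ω) :
    aproc v ε n s ω * aproc v ε n t ω ∈ Icc (0 : ℝ) 1 :=
  have hs := aproc_mem_Icc n s ω
  have ht := aproc_mem_Icc n t ω
  ⟨mul_nonneg hs.1 ht.1, mul_le_one₀ hs.2 ht.1 ht.2⟩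

lemma aproc_eq_one_of_aproc_mul_eq_one {n s t : ℕ} {ω : Ω}
    (h : aproc v ε n t ω * aproc v ε n s ω = 1) : aproc v ε n t ω = 1 :=
  (aproc_eq_zero_or_one v ε n t ω).resolve_left (left_ne_zero_of_mul (h.trans_ne one_ne_zero))

lemma aproc_eq_one {n t : ℕ} {ω : Ω} (hv : v (t / n) ≠ 0) (hε : ε n t ω ≠ 0) :
    aproc v ε n t ω = 1 :=
  if_pos (mul_ne_zero hv hε)

lemma windowMeasurable_aproc_mul (n h t : ℕ) :
    WindowMeasurable ε n h t fun ω => aproc v ε n t ω * aproc v ε n (t - h) ω := by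
  have hindicator (x : ℝ) : Measurable fun y => if x * y ≠ 0 then (1 : ℝ) else 0 :=
    Measurable.ite (measurableSet_eq_fun (measurable_id.const_mul x) measurable_const).compl
      measurable_const measurable_const
  exact windowMeasurable_prodMk (((hindicator (v (t / n))).comp measurable_fst).mul
    ((hindicator (v ((t - h : ℕ) / n))).comp measurable_snd)) n h t

end Indicators

lemma integral_eq_measureReal_mul_integral_cond {Ω : Type*} [MeasurableSpace Ω] {μ : Measure Ω}
    {A : Set Ω} {f : Ω → ℝ} (hf : ∀ ω, ω ∉ A → f ω = 0) (hA : μ.real A ≠ 0) :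
    ∫ ω, f ω ∂μ = μ.real A * ∫ ω, f ω ∂(μ[|A]) := by
  rw [ProbabilityTheory.cond, integral_smul_measure,
    setIntegral_eq_integral_of_forall_compl_eq_zero hf, ENNReal.toReal_inv, smul_eq_mul,
    ← mul_assoc, ← measureReal_def, mul_inv_cancel₀ hA, one_mul]

lemma abs_mul_rpow_le (p x y : ℝ) :
    |x * y| ^ p ≤ |x| ^ (2 * p) + |y| ^ (2 * p) := by
  have hsq (z : ℝ) : |z| ^ (2 * p) = (|z| ^ p) ^ 2 := by
    rw [mul_comm, Real.rpow_mul (abs_nonneg z), Real.rpow_two]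
  rw [abs_mul, Real.mul_rpow (abs_nonneg x) (abs_nonneg y), hsq, hsq]
  nlinarith [sq_nonneg (|x| ^ p - |y| ^ p), sq_nonneg (|x| ^ p), sq_nonneg (|y| ^ p)]

/-- The non-stationary zero-returns model with mixing, up to lag `m`. Regularity of `v` and of the
`g h` is expressed as continuity at almost every point of `(0,1]`, and mixing as `α_ε(h) → 0`. -/
structure ZeroReturnsModel {Ω : Type*} [MeasurableSpace Ω] (μ : Measure Ω) (m : ℕ) (v : ℝ → ℝ)
    (g : ℕ → ℝ → ℝ) (ε : ℕ → ℕ → Ω → ℝ) (ν : ℝ) : Prop where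
  measurable : ∀ n t, Measurable (ε n t)
  v_pos : ∀ s ∈ Ioc (0 : ℝ) 1, 0 < v s
  v_bounded : ∃ M, ∀ s ∈ Ioc (0 : ℝ) 1, |v s| ≤ M
  v_continuousAt : ∀ᵐ s : ℝ, s ∈ Ioc (0 : ℝ) 1 → ContinuousAt v s
  g_pos : ∀ h ≤ m, ∀ s ∈ Ioc (0 : ℝ) 1, 0 < g h s
  g_le_one : ∀ h ≤ m, ∀ s ∈ Ioc (0 : ℝ) 1, g h s ≤ 1
  g_continuousAt : ∀ h ≤ m, ∀ᵐ s : ℝ, s ∈ Ioc (0 : ℝ) 1 → ContinuousAt (g h) s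
  prob : ∀ h ≤ m, ∀ n t : ℕ, h < t → t ≤ n →
    μ.real {ω | aproc v ε n t ω * aproc v ε n (t - h) ω = 1} = g h (t / n)
  cond_sq : ∀ n t : ℕ, 1 ≤ t → t ≤ n → ∫ ω, ε n t ω ^ 2 ∂(μ[|{ω | aproc v ε n t ω = 1}]) = 1
  tendsto_alphaMix : Tendsto (alphaMix μ ε) atTop (nhds 0)
  nu_pos : 0 < ν
  moment : ∃ M : ℝ, ∀ n t : ℕ, 1 ≤ t → t ≤ n →
    ∫⁻ ω, ENNReal.ofReal (|ε n t ω| ^ (2 + 2 * ν)) ∂μ ≤ ENNReal.ofReal M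

namespace ZeroReturnsModel

variable {Ω : Type*} [MeasurableSpace Ω] {μ : Measure Ω} {m : ℕ} {v : ℝ → ℝ} {g : ℕ → ℝ → ℝ}
  {ε : ℕ → ℕ → Ω → ℝ} {ν : ℝ}

lemma exists_v_le (H : ZeroReturnsModel μ m v g ε ν) :
    ∃ V, 0 ≤ V ∧ ∀ s ∈ Ioc (0 : ℝ) 1, |v s| ≤ V := by
  obtain ⟨V, hV⟩ := H.v_bounded
  exact ⟨V, (abs_nonneg _).trans (hV 1 (by simp)), hV⟩

lemma abs_g_le_one (H : ZeroReturnsModel μ m v g ε ν) {h : ℕ} (hm : h ≤ m) {s : ℝ}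
    (hs : s ∈ Ioc (0 : ℝ) 1) : |g h s| ≤ 1 :=
  (abs_of_pos (H.g_pos h hm s hs)).trans_le (H.g_le_one h hm s hs)

lemma exists_integral_rpow_le (H : ZeroReturnsModel μ m v g ε ν) :
    ∃ C, 0 ≤ C ∧ ∀ n t : ℕ, 1 ≤ t → t ≤ n →
      Integrable (fun ω => |ε n t ω| ^ (2 + 2 * ν)) μ ∧ ∫ ω, |ε n t ω| ^ (2 + 2 * ν) ∂μ ≤ C := by
  obtain ⟨M, hM⟩ := H.moment
  refine ⟨max M 0, le_max_right M 0, fun n t h₁ hn => ?_⟩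
  have hmeas : AEStronglyMeasurable (fun ω => |ε n t ω| ^ (2 + 2 * ν)) μ :=
    ((H.measurable n t).norm.pow_const _).aestronglyMeasurable
  have hnonneg : 0 ≤ᵐ[μ] fun ω => |ε n t ω| ^ (2 + 2 * ν) := ae_of_all _ fun ω => by positivity
  refine ⟨⟨hmeas, (hasFiniteIntegral_iff_ofReal hnonneg).2
    ((hM n t h₁ hn).trans_lt ENNReal.ofReal_lt_top)⟩, ?_⟩
  rw [integral_eq_lintegral_of_nonneg_ae hnonneg hmeas, ← ENNReal.toReal_ofReal']
  exact ENNReal.toReal_mono ENNReal.ofReal_ne_top (hM n t h₁ hn)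

lemma exists_integral_mul_rpow_le (H : ZeroReturnsModel μ m v g ε ν) :
    ∃ C, 0 ≤ C ∧ ∀ n k t : ℕ, k < t → t ≤ n →
      Integrable (fun ω => |ε n t ω * ε n (t - k) ω| ^ (1 + ν)) μ ∧
        ∫ ω, |ε n t ω * ε n (t - k) ω| ^ (1 + ν) ∂μ ≤ C := by
  obtain ⟨C, hC, hεC⟩ := H.exists_integral_rpow_le
  refine ⟨C + C, by positivity, fun n k t hk hn => ?_⟩
  obtain ⟨hi, hle⟩ := hεC n t (by omega) hn
  obtain ⟨hi', hle'⟩ := hεC n (t - k) (by omega) (by omega)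
  have hprod (ω) : |ε n t ω * ε n (t - k) ω| ^ (1 + ν)
      ≤ |ε n t ω| ^ (2 + 2 * ν) + |ε n (t - k) ω| ^ (2 + 2 * ν) := by
    simpa only [mul_add, mul_one] using abs_mul_rpow_le (1 + ν) (ε n t ω) (ε n (t - k) ω)
  have hint : Integrable (fun ω => |ε n t ω * ε n (t - k) ω| ^ (1 + ν)) μ :=
    (hi.add hi').mono'
      (((H.measurable n t).mul (H.measurable n (t - k))).norm.pow_const _).aestronglyMeasurable
      (ae_of_all _ fun ω => by
        rw [Real.norm_of_nonneg (by positivity)]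
        exact hprod ω)
  refine ⟨hint, (integral_mono hint (hi.add hi') hprod).trans ?_⟩
  exact (integral_add hi hi').trans_le (add_le_add hle hle')

lemma measurableSet_aproc_mul_eq_one (H : ZeroReturnsModel μ m v g ε ν) (n h t : ℕ) :
    MeasurableSet {ω | aproc v ε n t ω * aproc v ε n (t - h) ω = 1} :=
  ((windowMeasurable_aproc_mul n h t).measurable H.measurable) (measurableSet_singleton 1)

lemma integral_aproc_mul (H : ZeroReturnsModel μ m v g ε ν) {n h t : ℕ} (hm : h ≤ m)
    (ht : h < t) (hn : t ≤ n) :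
    ∫ ω, aproc v ε n t ω * aproc v ε n (t - h) ω ∂μ = g h (t / n) := by
  rw [← H.prob h hm n t ht hn, ← integral_indicator_one (H.measurableSet_aproc_mul_eq_one n h t)]
  congr 1
  ext ω
  rcases aproc_eq_zero_or_one v ε n t ω with h₁ | h₁ <;>
    rcases aproc_eq_zero_or_one v ε n (t - h) ω with h₂ | h₂ <;>
    simp [indicator, h₁, h₂]

lemma integral_mul_eq (H : ZeroReturnsModel μ m v g ε ν) {n h t : ℕ} (hm : h ≤ m)
    (ht : h < t) (hn : t ≤ n) :
    ∫ ω, ε n t ω * ε n (t - h) ω ∂μ = g h (t / n) * ∫ ω, ε n t ω * ε n (t - h) ω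
      ∂(μ[|{ω | aproc v ε n t ω * aproc v ε n (t - h) ω = 1}]) := by
  have hu := div_mem_Ioc (by omega : 1 ≤ t) hn
  have hu' := div_mem_Ioc (by omega : 1 ≤ t - h) (by omega : t - h ≤ n)
  rw [← H.prob h hm n t ht hn]
  refine integral_eq_measureReal_mul_integral_cond (fun ω hω => ?_) ?_
  · by_contra hne
    obtain ⟨h₁, h₂⟩ := mul_ne_zero_iff.1 hne
    exact hω (by simp [aproc_eq_one (H.v_pos _ hu).ne' h₁, aproc_eq_one (H.v_pos _ hu').ne' h₂])
  · rw [H.prob h hm n t ht hn]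
    exact (H.g_pos h hm _ hu).ne'

lemma integral_cond_mul_self (H : ZeroReturnsModel μ m v g ε ν) {n t : ℕ} (ht : 0 < t)
    (hn : t ≤ n) : ∫ ω, ε n t ω * ε n (t - 0) ω
      ∂(μ[|{ω | aproc v ε n t ω * aproc v ε n (t - 0) ω = 1}]) = 1 := by
  simpa only [Nat.sub_zero, aproc_mul_self, ← sq (ε n t _)] using H.cond_sq n t ht hn

lemma g_le_g_zero [IsFiniteMeasure μ] (H : ZeroReturnsModel μ m v g ε ν) {n h t : ℕ} (hm : h ≤ m)
    (ht : h < t) (hn : t ≤ n) : g h (t / n) ≤ g 0 (t / n) := by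
  rw [← H.prob h hm n t ht hn, ← H.prob 0 m.zero_le n t (by omega) hn]
  refine measureReal_mono fun ω hω => ?_
  simpa only [Nat.sub_zero, aproc_mul_self, mem_ofPred_eq] using
    aproc_eq_one_of_aproc_mul_eq_one hω

/-- The limit `∫₀¹ v² g_h` of `γ̂_{ar²}(h)`; by the conditional moment assumptions, `γ̂_0(h)` tends
to `ρ_ε(h)` times this quantity. -/
noncomputable def limitGamma (v : ℝ → ℝ) (g : ℕ → ℝ → ℝ) (h : ℕ) : ℝ :=
  ∫ x in (0 : ℝ)..1, v x ^ 2 * g h x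

lemma limitGamma_pos (H : ZeroReturnsModel μ m v g ε ν) {h : ℕ} (hm : h ≤ m) :
    0 < limitGamma v g h := by
  obtain ⟨V, -, hvV⟩ := H.exists_v_le
  refine intervalIntegral.intervalIntegral_pos_of_pos_on
    (intervalIntegrable_of_ae_continuousAt (B := V ^ 2 * 1) ?_ ?_) (fun x hx => ?_) one_pos
  · rw [uIoc_of_le zero_le_one]
    intro x hx
    rw [abs_mul, abs_pow]
    have hg := H.abs_g_le_one hm hx
    have hv := hvV x hx
    gcongr
  · rw [uIoc_of_le zero_le_one]
    filter_upwards [H.v_continuousAt, H.g_continuousAt h hm] with x hvx hgx hx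
    exact ((hvx hx).pow 2).mul (hgx hx)
  · have hx' := Ioo_subset_Ioc_self hx
    exact mul_pos (pow_pos (H.v_pos x hx') 2) (H.g_pos h hm x hx')

lemma tendsto_v_natCeil (H : ZeroReturnsModel μ m v g ε ν) (h : ℕ) :
    ∀ᵐ x : ℝ, x ∈ Ioc (0 : ℝ) 1 →
      Tendsto (fun n : ℕ => v ((⌈x * n⌉₊ - h : ℕ) / n)) atTop (nhds (v x)) := by
  filter_upwards [H.v_continuousAt] with x hvx hx
  exact (hvx hx).tendsto.comp (tendsto_natCeil_mul_sub_div hx.1 h)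

end ZeroReturnsModel

end Model

section Autocovariances

variable {Ω : Type*} [MeasurableSpace Ω] {μ : Measure Ω} [IsProbabilityMeasure μ] {m : ℕ}
  {v : ℝ → ℝ} {g : ℕ → ℝ → ℝ} {ε : ℕ → ℕ → Ω → ℝ} {ν : ℝ}

lemma negligibleWeights_inv (h : ℕ) :
    NegligibleWeights (fun n => Finset.Icc (h + 1) n) fun n _ => (n : ℝ)⁻¹ where
  nonneg n _ _ := by positivity
  sum_le_one n := by
    rw [Finset.sum_const, Nat.card_Icc, nsmul_eq_mul, ← div_eq_mul_inv]
    exact div_le_one_of_le₀ (by exact_mod_cast (by omega : n + 1 - (h + 1) ≤ n)) n.cast_nonneg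
  eventually_le δ hδ :=
    ((tendsto_inv_atTop_nhds_zero_nat (𝕜 := ℝ)).eventually_le_const hδ).mono fun _ hn _ _ => hn

namespace ZeroReturnsModel

lemma integrable_mul (H : ZeroReturnsModel μ m v g ε ν) {n k t : ℕ} (hk : k < t) (hn : t ≤ n) :
    Integrable (fun ω => ε n t ω * ε n (t - k) ω) μ := by
  obtain ⟨C, -, hC⟩ := H.exists_integral_mul_rpow_le
  exact integrable_of_integrable_abs_rpow H.nu_pos
    ((H.measurable n t).mul (H.measurable n (t - k))) (hC n k t hk hn).1

section

variable {k h : ℕ} {q : ℕ → ℕ → ℝ} {Q : ℝ}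

lemma tendsto_integral_abs_average_sub (H : ZeroReturnsModel μ m v g ε ν) (hk : k ≤ h) (hQ : 0 ≤ Q)
    (hq : ∀ n, ∀ t ∈ Finset.Icc (h + 1) n, |q n t| ≤ Q) :
    Tendsto (fun n : ℕ => ∫ ω, |(n : ℝ)⁻¹ * ∑ t ∈ Finset.Icc (h + 1) n,
        q n t * (ε n t ω * ε n (t - k) ω) - (n : ℝ)⁻¹ * ∑ t ∈ Finset.Icc (h + 1) n,
        q n t * ∫ ω', ε n t ω' * ε n (t - k) ω' ∂μ| ∂μ) atTop (nhds 0) := by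
  have hν := H.nu_pos
  obtain ⟨C, hC, hεC⟩ := H.exists_integral_mul_rpow_le
  have hsplit (n t : ℕ) (ω : Ω) : |q n t * (ε n t ω * ε n (t - k) ω)| ^ (1 + ν)
      = |q n t| ^ (1 + ν) * |ε n t ω * ε n (t - k) ω| ^ (1 + ν) := by
    rw [abs_mul, Real.mul_rpow (abs_nonneg _) (abs_nonneg _)]
  have hlaw := (negligibleWeights_inv h).tendsto_integral_abs (μ := μ) H.measurable
    H.tendsto_alphaMix hν (by positivity : 0 ≤ Q ^ (1 + ν) * C)
    (X := fun n t ω => q n t * (ε n t ω * ε n (t - k) ω)) (h := k)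
    (fun n t _ =>
      windowMeasurable_prodMk ((measurable_fst.mul measurable_snd).const_mul (q n t)) n k t)
    (fun n t ht => ?_) (fun n t ht => ?_)
  · refine hlaw.congr fun n => integral_congr_ae (ae_of_all _ fun ω => ?_)
    simp only [integral_const_mul, ← Finset.mul_sum, Finset.sum_sub_distrib, mul_sub]
  all_goals
    simp only [hsplit]
    obtain ⟨hht, htn⟩ := Finset.mem_Icc.1 ht
    obtain ⟨hint, hle⟩ := hεC n k t (by omega) htn
  · exact hint.const_mul _
  · rw [integral_const_mul]
    have := hq n t ht
    gcongr

theorem tendstoInMeasure_average (H : ZeroReturnsModel μ m v g ε ν) (hk : k ≤ h) (hm : k ≤ m)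
    (hQ : 0 ≤ Q) (hq : ∀ n, ∀ t ∈ Finset.Icc (h + 1) n, |q n t| ≤ Q) {φ : ℝ → ℝ}
    (hφ : ∀ᵐ x : ℝ, x ∈ Ioc (0 : ℝ) 1 → Tendsto (fun n => q n ⌈x * n⌉₊) atTop (nhds (φ x))) {ρ : ℝ}
    (hρ : ∀ n t : ℕ, k < t → t ≤ n → ∫ ω, ε n t ω * ε n (t - k) ω
      ∂(μ[|{ω | aproc v ε n t ω * aproc v ε n (t - k) ω = 1}]) = ρ) :
    TendstoInMeasure μ (fun (n : ℕ) ω => (n : ℝ)⁻¹ * ∑ t ∈ Finset.Icc (h + 1) n,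
      q n t * (ε n t ω * ε n (t - k) ω)) atTop fun _ => ∫ x in (0 : ℝ)..1, φ x * (g k x * ρ) := by
  have hint (n : ℕ) : Integrable (fun ω => (n : ℝ)⁻¹ * ∑ t ∈ Finset.Icc (h + 1) n,
      q n t * (ε n t ω * ε n (t - k) ω)) μ := by
    refine (integrable_finsetSum _ fun t ht => Integrable.const_mul ?_ _).const_mul _
    rw [Finset.mem_Icc] at ht
    exact H.integrable_mul (by omega) ht.2
  have hmean : Tendsto (fun n : ℕ => (n : ℝ)⁻¹ * ∑ t ∈ Finset.Icc (h + 1) n,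
      q n t * (g k (t / n) * ρ)) atTop (nhds (∫ x in (0 : ℝ)..1, φ x * (g k x * ρ))) := by
    refine tendsto_average (by positivity : 0 ≤ Q * (1 * |ρ|)) (fun n t ht => ?_) ?_
    · have hu := div_mem_Ioc (by grind : 1 ≤ t) (Finset.mem_Icc.1 ht).2
      rw [abs_mul, abs_mul]
      exact mul_le_mul (hq n t ht)
        (mul_le_mul_of_nonneg_right (H.abs_g_le_one hm hu) (abs_nonneg ρ)) (by positivity) hQ
    · filter_upwards [hφ, H.g_continuousAt k hm] with x hx hgx hx₀₁
      exact (hx hx₀₁).mul (((hgx hx₀₁).tendsto.comp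
        (tendsto_natCeil_mul_div hx₀₁.1.le)).mul_const ρ)
  refine tendstoInMeasure_of_tendsto_integral_abs_sub hint (integrable_const _)
    (tendsto_integral_abs_sub_of_tendsto_sub hint (H.tendsto_integral_abs_average_sub hk hQ hq)
      (tendsto_sub_nhds_zero_iff.2 (hmean.congr fun n => ?_)))
  congr 1
  refine Finset.sum_congr rfl fun t ht => ?_
  rw [Finset.mem_Icc] at ht
  rw [H.integral_mul_eq hm (by omega) ht.2, hρ n t (by omega) ht.2]

end

theorem tendstoInMeasure_gammaHat0 (H : ZeroReturnsModel μ m v g ε ν) {h : ℕ} (hm : h ≤ m) {ρ : ℝ}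
    (hρ : ∀ n t : ℕ, h < t → t ≤ n → ∫ ω, ε n t ω * ε n (t - h) ω
      ∂(μ[|{ω | aproc v ε n t ω * aproc v ε n (t - h) ω = 1}]) = ρ) :
    TendstoInMeasure μ (gammaHat0 v ε · h) atTop fun _ => limitGamma v g h * ρ := by
  obtain ⟨V, hV, hvV⟩ := H.exists_v_le
  have hlim := H.tendstoInMeasure_average le_rfl hm (by positivity : 0 ≤ V * V)
    (q := fun n t => v (t / n) * v ((t - h : ℕ) / n)) (φ := fun x => v x * v x)
    (fun n t ht => ?_) ?_ hρ
  · convert hlim using 2 with n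
    · ext ω
      simp only [gammaHat0, rproc, mul_mul_mul_comm]
    · simp only [limitGamma, ← intervalIntegral.integral_mul_const, sq, mul_assoc]
  · rw [Finset.mem_Icc] at ht
    rw [abs_mul]
    exact mul_le_mul (hvV _ (div_mem_Ioc (by omega) ht.2))
      (hvV _ (div_mem_Ioc (by omega) (by omega))) (abs_nonneg _) hV
  · filter_upwards [H.tendsto_v_natCeil 0, H.tendsto_v_natCeil h] with x hx₀ hxh hx
    simpa only [Nat.sub_zero] using (hx₀ hx).mul (hxh hx)

end ZeroReturnsModel

end Autocovariances

section KernelConsistency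

lemma abs_div_sub_div_le {p q x y : ℝ} (hp : 0 ≤ p) (hpq : p ≤ q) (hy : 0 < y) :
    |p / q - x / y| ≤ y⁻¹ * (|q - y| + |p - x|) := by
  have hcancel : p / q * q = p :=
    div_mul_cancel_of_imp fun hq => (hpq.trans_eq hq).antisymm hp
  have hsplit : p / q - x / y = y⁻¹ * (p / q * (y - q) + (p - x)) := by
    rw [mul_sub, hcancel]
    field_simp
    ring
  rw [hsplit, abs_mul, abs_of_pos (inv_pos.2 hy)]
  refine mul_le_mul_of_nonneg_left ((abs_add_le _ _).trans (add_le_add_left ?_ _))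
    (inv_pos.2 hy).le
  rw [abs_mul, abs_of_nonneg (div_nonneg hp (hp.trans hpq)), abs_sub_comm y]
  exact mul_le_of_le_one_left (abs_nonneg _) (div_le_one_of_le₀ hpq (hp.trans hpq))

lemma integral_abs_mul_le_of_le_one {Ω : Type*} [MeasurableSpace Ω] {μ : Measure Ω}
    [IsProbabilityMeasure μ] {ν C M : ℝ} (hν : 0 < ν) (hM : 0 < M) {X D : Ω → ℝ}
    (hXi : Integrable (fun ω => |X ω| ^ (1 + ν)) μ) (hXC : ∫ ω, |X ω| ^ (1 + ν) ∂μ ≤ C)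
    (hD : Measurable D) (hD₀₁ : ∀ ω, D ω ∈ Icc (0 : ℝ) 1) :
    ∫ ω, |X ω| * D ω ∂μ ≤ M * ∫ ω, D ω ∂μ + C * (M ^ ν)⁻¹ := by
  have hDi : Integrable D μ := .of_mem_Icc 0 1 hD.aemeasurable (ae_of_all _ hD₀₁)
  have htrunc (ω) : |X ω| * D ω ≤ M * D ω + |X ω| ^ (1 + ν) * (M ^ ν)⁻¹ :=
    calc |X ω| * D ω ≤ (M + |X ω| ^ (1 + ν) * (M ^ ν)⁻¹) * D ω :=
          mul_le_mul_of_nonneg_right (le_add_rpow_mul_inv hν hM (abs_nonneg _)) (hD₀₁ ω).1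
      _ ≤ M * D ω + |X ω| ^ (1 + ν) * (M ^ ν)⁻¹ := by
          rw [add_mul]
          exact add_le_add_right (mul_le_of_le_one_right (by positivity) (hD₀₁ ω).2) _
  calc ∫ ω, |X ω| * D ω ∂μ ≤ ∫ ω, (M * D ω + |X ω| ^ (1 + ν) * (M ^ ν)⁻¹) ∂μ :=
        integral_mono_of_nonneg (ae_of_all _ fun ω => mul_nonneg (abs_nonneg _) (hD₀₁ ω).1)
          ((hDi.const_mul M).add (hXi.mul_const _)) (ae_of_all _ htrunc)
    _ ≤ M * ∫ ω, D ω ∂μ + C * (M ^ ν)⁻¹ := by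
        rw [integral_add (hDi.const_mul M) (hXi.mul_const _), integral_const_mul,
          integral_mul_const]
        gcongr

variable {Ω : Type*} {v : ℝ → ℝ} {g : ℕ → ℝ → ℝ} {ε : ℕ → ℕ → Ω → ℝ} {K : ℝ → ℝ} {b : ℕ → ℝ}

lemma phat_eq_phat2_zero (n t : ℕ) (ω : Ω) : phat v ε K b n t ω = phat2 v ε K b n 0 t ω := by
  simp only [phat, phat2, Nat.sub_zero, aproc_mul_self]

namespace KernelBandwidth

lemma phat2_nonneg (HK : KernelBandwidth K b) (n h t : ℕ) (ω : Ω) : 0 ≤ phat2 v ε K b n h t ω :=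
  Finset.sum_nonneg fun j _ => mul_nonneg (HK.wgt_nonneg n t j) (aproc_mul_mem_Icc n j _ ω).1

lemma phat2_le_phat2_zero (HK : KernelBandwidth K b) (n h t : ℕ) (ω : Ω) :
    phat2 v ε K b n h t ω ≤ phat2 v ε K b n 0 t ω := by
  have hterm (j : ℕ) : aproc v ε n j ω * aproc v ε n (j - h) ω
      ≤ aproc v ε n j ω * aproc v ε n (j - 0) ω := by
    rw [Nat.sub_zero, aproc_mul_self]
    exact mul_le_of_le_one_right (aproc_mem_Icc n j ω).1 (aproc_mem_Icc n _ ω).2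
  refine (Finset.sum_le_sum fun j _ =>
    mul_le_mul_of_nonneg_left (hterm j) (HK.wgt_nonneg n t j)).trans ?_
  exact Finset.sum_le_sum_of_subset_of_nonneg (Finset.Icc_subset_Icc_left (by omega))
    fun j _ _ => mul_nonneg (HK.wgt_nonneg n t j) (aproc_mul_mem_Icc n j _ ω).1

lemma phat2_le_one (HK : KernelBandwidth K b) (n h t : ℕ) (ω : Ω) : phat2 v ε K b n h t ω ≤ 1 :=
  (Finset.sum_le_sum fun j _ => mul_le_of_le_one_right (HK.wgt_nonneg n t j)
    (aproc_mul_mem_Icc n j _ ω).2).trans (HK.sum_wgt_le_one n h t)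

end KernelBandwidth

/-- The error committed when the conditional probability `P(a_{t-h} = 1 | a_t = 1)`, which is
`g_h(t/n) / g_0(t/n)`, is estimated by `p̂_{t,t-h} / p̂_t`. -/
noncomputable def ratioError (v : ℝ → ℝ) (g : ℕ → ℝ → ℝ) (ε : ℕ → ℕ → Ω → ℝ) (K : ℝ → ℝ)
    (b : ℕ → ℝ) (n h t : ℕ) (ω : Ω) : ℝ :=
  phat2 v ε K b n h t ω / phat2 v ε K b n 0 t ω - g h (t / n) / g 0 (t / n)

lemma gammaAr2_eq (n h : ℕ) (ω : Ω) :
    gammaAr2 v ε K b n h ω = (n : ℝ) / (n - h) *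
      ((n : ℝ)⁻¹ * ∑ t ∈ Finset.Icc (h + 1) n, rproc v ε n t ω ^ 2 * (g h (t / n) / g 0 (t / n))
      + (n : ℝ)⁻¹ * ∑ t ∈ Finset.Icc (h + 1) n,
        rproc v ε n t ω ^ 2 * ratioError v g ε K b n h t ω) := by
  have hterm (t : ℕ) : rproc v ε n t ω ^ 2 *
      (if phat v ε K b n t ω = 0 then 0 else phat2 v ε K b n h t ω / phat v ε K b n t ω)
      = rproc v ε n t ω ^ 2 * (g h (t / n) / g 0 (t / n))
        + rproc v ε n t ω ^ 2 * ratioError v g ε K b n h t ω := by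
    rw [ratioError, ← phat_eq_phat2_zero]
    split_ifs with hp
    · rw [hp, div_zero]
      ring
    · ring
  simp_rw [gammaAr2, hterm, Finset.sum_add_distrib]
  rcases eq_or_ne n 0 with rfl | hn
  · simp
  · field_simp

variable [MeasurableSpace Ω] {μ : Measure Ω} {m : ℕ} {ν : ℝ}

lemma measurable_phat2 (hε : ∀ n t, Measurable (ε n t)) (n h t : ℕ) :
    Measurable (phat2 v ε K b n h t) :=
  Finset.measurable_fun_sum _ fun j _ =>
    ((windowMeasurable_aproc_mul n h j).measurable hε).const_mul _

lemma measurable_ratioError (hε : ∀ n t, Measurable (ε n t)) (n h t : ℕ) :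
    Measurable (ratioError v g ε K b n h t) :=
  ((measurable_phat2 hε n h t).div (measurable_phat2 hε n 0 t)).sub_const _

lemma KernelBandwidth.integrable_phat2 [IsFiniteMeasure μ] (HK : KernelBandwidth K b)
    (hε : ∀ n t, Measurable (ε n t)) (n h t : ℕ) : Integrable (phat2 v ε K b n h t) μ :=
  .of_bound (measurable_phat2 hε n h t).aestronglyMeasurable 1 <| ae_of_all _ fun ω => by
    rw [Real.norm_of_nonneg (HK.phat2_nonneg n h t ω)]
    exact HK.phat2_le_one n h t ω

namespace ZeroReturnsModel

section

variable [IsFiniteMeasure μ] {n h t : ℕ}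

lemma g_div_g_zero_mem_Icc (H : ZeroReturnsModel μ m v g ε ν) (hm : h ≤ m) (ht : h < t)
    (hn : t ≤ n) : g h (t / n) / g 0 (t / n) ∈ Icc (0 : ℝ) 1 := by
  have hu := div_mem_Ioc (by omega : 1 ≤ t) hn
  have hg₀ := (H.g_pos 0 m.zero_le _ hu).le
  exact ⟨div_nonneg (H.g_pos h hm _ hu).le hg₀, div_le_one_of_le₀ (H.g_le_g_zero hm ht hn) hg₀⟩

lemma abs_ratioError_mem_Icc (H : ZeroReturnsModel μ m v g ε ν) (HK : KernelBandwidth K b)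
    (hm : h ≤ m) (ht : h < t) (hn : t ≤ n) (ω : Ω) :
    |ratioError v g ε K b n h t ω| ∈ Icc (0 : ℝ) 1 := by
  have hp := HK.phat2_nonneg (v := v) (ε := ε) n h t ω
  have hpp := HK.phat2_le_phat2_zero (v := v) (ε := ε) n h t ω
  exact ⟨abs_nonneg _, (abs_sub_le_of_nonneg_of_le (div_nonneg hp (hp.trans hpp))
    (div_le_one_of_le₀ hpp (hp.trans hpp)) (H.g_div_g_zero_mem_Icc hm ht hn).1
    (H.g_div_g_zero_mem_Icc hm ht hn).2)⟩

end

variable [IsProbabilityMeasure μ]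

lemma tendsto_integral_abs_phat2_sub (H : ZeroReturnsModel μ m v g ε ν) (HK : KernelBandwidth K b)
    {h : ℕ} (hm : h ≤ m) {t : ℕ → ℕ} {x : ℝ} (hx : x ∈ Ioo (0 : ℝ) 1)
    (ht : Tendsto (fun n => (t n : ℝ) / n) atTop (nhds x)) (hg : ContinuousAt (g h) x) :
    Tendsto (fun n : ℕ => ∫ ω, |phat2 v ε K b n h (t n) ω - g h (t n / n)| ∂μ)
      atTop (nhds 0) := by
  have hlaw := (HK.negligibleWeights_wgt hx ht h).tendsto_integral_abs_of_bounded
    H.measurable H.tendsto_alphaMix (M := 1) (h := h)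
    (X := fun n j ω => aproc v ε n j ω * aproc v ε n (j - h) ω)
    (fun n j _ => windowMeasurable_aproc_mul n h j)
    (fun n j _ ω => (abs_of_nonneg (aproc_mul_mem_Icc n j _ ω).1).trans_le
      (aproc_mul_mem_Icc n j _ ω).2) zero_le_one
  refine tendsto_integral_abs_sub_of_tendsto_sub
    (d := fun n => ∑ j ∈ Finset.Icc (h + 1) n, wgt K b n (t n) j * g h (j / n))
    (fun n => HK.integrable_phat2 H.measurable n h _) (hlaw.congr fun n => ?_) ?_
  · congr 1 with ω
    rw [phat2, ← Finset.sum_sub_distrib]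
    refine congrArg abs (Finset.sum_congr rfl fun j hj => ?_)
    rw [Finset.mem_Icc] at hj
    rw [H.integral_aproc_mul hm (by omega) hj.2, mul_sub]
  · simpa using (HK.tendsto_sum_wgt_mul hx ht h hg).sub (hg.tendsto.comp ht)

lemma integrable_abs_phat2_sub (H : ZeroReturnsModel μ m v g ε ν) (HK : KernelBandwidth K b)
    (n h t : ℕ) (y : ℝ) : Integrable (fun ω => |phat2 v ε K b n h t ω - y|) μ :=
  ((HK.integrable_phat2 H.measurable n h t).sub (integrable_const y)).abs

lemma integral_abs_ratioError_le (H : ZeroReturnsModel μ m v g ε ν) (HK : KernelBandwidth K b)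
    {n t : ℕ} (h : ℕ) (hg : 0 < g 0 (t / n)) :
    ∫ ω, |ratioError v g ε K b n h t ω| ∂μ
      ≤ (g 0 (t / n))⁻¹ * (∫ ω, |phat2 v ε K b n 0 t ω - g 0 (t / n)| ∂μ
        + ∫ ω, |phat2 v ε K b n h t ω - g h (t / n)| ∂μ) := by
  have hint := (H.integrable_abs_phat2_sub HK n 0 t (g 0 (t / n))).add
    (H.integrable_abs_phat2_sub HK n h t (g h (t / n)))
  rw [← integral_add (H.integrable_abs_phat2_sub HK n 0 t _)
    (H.integrable_abs_phat2_sub HK n h t _), ← integral_const_mul]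
  exact integral_mono_of_nonneg (ae_of_all _ fun ω => abs_nonneg _) (hint.const_mul _)
    (ae_of_all _ fun ω => abs_div_sub_div_le (HK.phat2_nonneg n h t ω)
      (HK.phat2_le_phat2_zero n h t ω) hg)

lemma tendsto_integral_abs_ratioError (H : ZeroReturnsModel μ m v g ε ν)
    (HK : KernelBandwidth K b) {h : ℕ} (hm : h ≤ m) {t : ℕ → ℕ} {x : ℝ} (hx : x ∈ Ioo (0 : ℝ) 1)
    (ht : Tendsto (fun n => (t n : ℝ) / n) atTop (nhds x)) (hg₀ : ContinuousAt (g 0) x)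
    (hg : ContinuousAt (g h) x) :
    Tendsto (fun n : ℕ => ∫ ω, |ratioError v g ε K b n h (t n) ω| ∂μ) atTop (nhds 0) := by
  have hgx : 0 < g 0 x := H.g_pos 0 m.zero_le x (Ioo_subset_Ioc_self hx)
  have hg₀t : Tendsto (fun n => g 0 (t n / n)) atTop (nhds (g 0 x)) := hg₀.tendsto.comp ht
  refine squeeze_zero' (.of_forall fun n => integral_nonneg fun ω => abs_nonneg _)
    ((hg₀t.eventually_const_lt hgx).mono fun n hn => H.integral_abs_ratioError_le HK h hn) ?_
  simpa using (hg₀t.inv₀ hgx.ne').mul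
    ((H.tendsto_integral_abs_phat2_sub HK m.zero_le hx ht hg₀).add
      (H.tendsto_integral_abs_phat2_sub HK hm hx ht hg))

lemma tendsto_integral_sq_mul_ratioError (H : ZeroReturnsModel μ m v g ε ν)
    (HK : KernelBandwidth K b) {h : ℕ} (hm : h ≤ m) :
    ∀ᵐ x : ℝ, x ∈ Ioc (0 : ℝ) 1 → Tendsto (fun n : ℕ =>
      ∫ ω, ε n ⌈x * n⌉₊ ω ^ 2 * |ratioError v g ε K b n h ⌈x * n⌉₊ ω| ∂μ) atTop (nhds 0) := by
  obtain ⟨C, -, hC⟩ := H.exists_integral_mul_rpow_le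
  filter_upwards [H.g_continuousAt 0 m.zero_le, H.g_continuousAt h hm,
    Measure.ae_ne volume (1 : ℝ)] with x hg₀ hg hx₁ hx
  have hratio := H.tendsto_integral_abs_ratioError HK hm ⟨hx.1, hx.2.lt_of_ne hx₁⟩
    (tendsto_natCeil_mul_div hx.1.le) (hg₀ hx) (hg hx)
  refine tendsto_zero_of_le_add_mul_inv_rpow (C := C) H.nu_pos
    (fun n => integral_nonneg fun ω => by positivity)
    (fun M _ => by simpa using hratio.const_mul M) fun M hM => ?_
  filter_upwards [eventually_natCeil_mul_mem_Icc hx h] with n hn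
  obtain ⟨hht, htn⟩ := Finset.mem_Icc.1 hn
  obtain ⟨hi, hle⟩ := hC n 0 ⌈x * n⌉₊ (by omega) htn
  rw [Nat.sub_zero] at hi hle
  have htrunc := integral_abs_mul_le_of_le_one H.nu_pos hM hi hle
    (measurable_ratioError H.measurable n h _).abs (H.abs_ratioError_mem_Icc HK hm hht htn)
  simpa only [← sq, abs_sq] using htrunc

lemma integrable_sq_mul_abs_ratioError (H : ZeroReturnsModel μ m v g ε ν)
    (HK : KernelBandwidth K b) {n h t : ℕ} (hm : h ≤ m) (ht : h < t) (hn : t ≤ n) :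
    Integrable (fun ω => ε n t ω ^ 2 * |ratioError v g ε K b n h t ω|) μ := by
  have hsq := H.integrable_mul (k := 0) (by omega : 0 < t) hn
  simp_rw [Nat.sub_zero, ← sq] at hsq
  refine hsq.mul_bdd (c := 1)
    (measurable_ratioError H.measurable n h t).abs.aestronglyMeasurable (ae_of_all _ fun ω => ?_)
  rw [Real.norm_of_nonneg (abs_nonneg _)]
  exact (H.abs_ratioError_mem_Icc HK hm ht hn ω).2

lemma integral_sq_mul_abs_ratioError_le_one (H : ZeroReturnsModel μ m v g ε ν)
    (HK : KernelBandwidth K b) {n h t : ℕ} (hm : h ≤ m) (ht : h < t) (hn : t ≤ n) :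
    ∫ ω, ε n t ω ^ 2 * |ratioError v g ε K b n h t ω| ∂μ ≤ 1 := by
  have hsq := H.integrable_mul (k := 0) (by omega : 0 < t) hn
  have hmean := H.integral_mul_eq m.zero_le (by omega : 0 < t) hn
  rw [H.integral_cond_mul_self (by omega) hn, mul_one] at hmean
  simp_rw [Nat.sub_zero, ← sq] at hsq hmean
  refine (integral_mono (H.integrable_sq_mul_abs_ratioError HK hm ht hn) hsq fun ω =>
    mul_le_of_le_one_right (sq_nonneg _) (H.abs_ratioError_mem_Icc HK hm ht hn ω).2).trans ?_
  exact hmean.trans_le (H.g_le_one 0 m.zero_le _ (div_mem_Ioc (by omega) hn))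

lemma integrable_average_mul_ratioError (H : ZeroReturnsModel μ m v g ε ν)
    (HK : KernelBandwidth K b) {h : ℕ} (hm : h ≤ m) (n : ℕ) :
    Integrable (fun ω => (n : ℝ)⁻¹ * ∑ t ∈ Finset.Icc (h + 1) n,
      rproc v ε n t ω ^ 2 * ratioError v g ε K b n h t ω) μ := by
  refine (integrable_finsetSum _ fun t ht => ?_).const_mul _
  rw [Finset.mem_Icc] at ht
  have hmeas : Measurable fun ω => rproc v ε n t ω ^ 2 * ratioError v g ε K b n h t ω :=
    (((H.measurable n t).const_mul (v (t / n))).pow_const 2).mul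
      (measurable_ratioError H.measurable n h t)
  refine ((H.integrable_sq_mul_abs_ratioError HK hm ht.1 ht.2).const_mul (v (t / n) ^ 2)).mono'
    hmeas.aestronglyMeasurable (ae_of_all _ fun ω => le_of_eq ?_)
  rw [rproc, Real.norm_eq_abs, abs_mul, abs_sq, mul_pow, mul_assoc]

lemma integral_abs_average_mul_ratioError_le (H : ZeroReturnsModel μ m v g ε ν)
    (HK : KernelBandwidth K b) {h : ℕ} (hm : h ≤ m) (n : ℕ) :
    ∫ ω, |(n : ℝ)⁻¹ * ∑ t ∈ Finset.Icc (h + 1) n,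
        rproc v ε n t ω ^ 2 * ratioError v g ε K b n h t ω| ∂μ
      ≤ (n : ℝ)⁻¹ * ∑ t ∈ Finset.Icc (h + 1) n,
        v (t / n) ^ 2 * ∫ ω, ε n t ω ^ 2 * |ratioError v g ε K b n h t ω| ∂μ := by
  have hterm : ∀ t ∈ Finset.Icc (h + 1) n, Integrable
      (fun ω => v (t / n) ^ 2 * (ε n t ω ^ 2 * |ratioError v g ε K b n h t ω|)) μ := fun t ht => by
    rw [Finset.mem_Icc] at ht
    exact (H.integrable_sq_mul_abs_ratioError HK hm ht.1 ht.2).const_mul _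
  simp_rw [← integral_const_mul (v _ ^ 2)]
  rw [← integral_finsetSum _ hterm, ← integral_const_mul]
  refine integral_mono_of_nonneg (ae_of_all _ fun ω => abs_nonneg _)
    ((integrable_finsetSum _ hterm).const_mul _) (ae_of_all _ fun ω => ?_)
  dsimp only
  rw [abs_mul, abs_of_nonneg (by positivity : 0 ≤ (n : ℝ)⁻¹)]
  refine mul_le_mul_of_nonneg_left ((Finset.abs_sum_le_sum_abs _ _).trans_eq
    (Finset.sum_congr rfl fun t _ => ?_)) (by positivity)
  rw [rproc, abs_mul, abs_sq, mul_pow, mul_assoc]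

lemma tendstoInMeasure_average_mul_ratioError (H : ZeroReturnsModel μ m v g ε ν)
    (HK : KernelBandwidth K b) {h : ℕ} (hm : h ≤ m) :
    TendstoInMeasure μ (fun (n : ℕ) ω => (n : ℝ)⁻¹ * ∑ t ∈ Finset.Icc (h + 1) n,
      rproc v ε n t ω ^ 2 * ratioError v g ε K b n h t ω) atTop fun _ => 0 := by
  obtain ⟨V, -, hvV⟩ := H.exists_v_le
  have hbound : Tendsto (fun n : ℕ => (n : ℝ)⁻¹ * ∑ t ∈ Finset.Icc (h + 1) n,
      v (t / n) ^ 2 * ∫ ω, ε n t ω ^ 2 * |ratioError v g ε K b n h t ω| ∂μ) atTop (nhds 0) := by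
    rw [← intervalIntegral.integral_zero (μ := volume) (a := 0) (b := 1) (E := ℝ)]
    refine tendsto_average (by positivity : 0 ≤ V ^ 2 * 1) (fun n t ht => ?_) ?_
    · obtain ⟨hht, htn⟩ := Finset.mem_Icc.1 ht
      rw [abs_mul, abs_pow, abs_of_nonneg (integral_nonneg fun ω => by positivity)]
      have := hvV _ (div_mem_Ioc (by omega) htn)
      have := H.integral_sq_mul_abs_ratioError_le_one HK hm hht htn
      gcongr
    · filter_upwards [H.tendsto_integral_sq_mul_ratioError HK hm, H.tendsto_v_natCeil 0]
        with x hx hvx hx₀₁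
      simpa using ((hvx hx₀₁).pow 2).mul (hx hx₀₁)
  refine tendstoInMeasure_of_tendsto_integral_abs_sub
    (H.integrable_average_mul_ratioError HK hm) (integrable_const 0) ?_
  simp_rw [sub_zero]
  exact squeeze_zero (fun n => integral_nonneg fun ω => abs_nonneg _)
    (H.integral_abs_average_mul_ratioError_le HK hm) hbound

lemma tendstoInMeasure_average_mul_ratio (H : ZeroReturnsModel μ m v g ε ν) {h : ℕ}
    (hm : h ≤ m) :
    TendstoInMeasure μ (fun (n : ℕ) ω => (n : ℝ)⁻¹ * ∑ t ∈ Finset.Icc (h + 1) n,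
      rproc v ε n t ω ^ 2 * (g h (t / n) / g 0 (t / n))) atTop fun _ => limitGamma v g h := by
  obtain ⟨V, -, hvV⟩ := H.exists_v_le
  have hlim := H.tendstoInMeasure_average h.zero_le m.zero_le (by positivity : 0 ≤ V ^ 2 * 1)
    (q := fun n t => v (t / n) ^ 2 * (g h (t / n) / g 0 (t / n)))
    (φ := fun x => v x ^ 2 * (g h x / g 0 x)) (fun n t ht => ?_) ?_
    (fun n t ht hn => H.integral_cond_mul_self ht hn)
  · convert hlim using 2 with n
    · ext ω
      refine congrArg _ (Finset.sum_congr rfl fun t _ => ?_)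
      rw [rproc, Nat.sub_zero]
      ring
    · refine intervalIntegral.integral_congr_ae (ae_of_all _ fun x hx => ?_)
      rw [uIoc_of_le zero_le_one] at hx
      have := (H.g_pos 0 m.zero_le x hx).ne'
      field_simp
  · obtain ⟨hht, htn⟩ := Finset.mem_Icc.1 ht
    have hg := H.g_div_g_zero_mem_Icc hm hht htn
    rw [abs_mul, abs_pow, abs_of_nonneg hg.1]
    exact mul_le_mul (pow_le_pow_left₀ (abs_nonneg _) (hvV _ (div_mem_Ioc (by omega) htn)) 2) hg.2
      hg.1 (by positivity)
  · filter_upwards [H.tendsto_v_natCeil 0, H.g_continuousAt 0 m.zero_le, H.g_continuousAt h hm]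
      with x hvx hg₀ hg hx
    have hceil := tendsto_natCeil_mul_div hx.1.le
    exact ((hvx hx).pow 2).mul (((hg hx).tendsto.comp hceil).div ((hg₀ hx).tendsto.comp hceil)
      (H.g_pos 0 m.zero_le x hx).ne')

end ZeroReturnsModel

theorem ZeroReturnsModel.tendstoInMeasure_gammaAr2 [IsProbabilityMeasure μ]
    (H : ZeroReturnsModel μ m v g ε ν) (HK : KernelBandwidth K b) {h : ℕ} (hm : h ≤ m) :
    TendstoInMeasure μ (gammaAr2 v ε K b · h) atTop fun _ => limitGamma v g h := by
  have hfactor : Tendsto (fun n : ℕ => (n : ℝ) / (n - h)) atTop (nhds 1) := by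
    simpa only [← sub_eq_add_neg] using tendsto_natCast_div_add_atTop (-(h : ℝ))
  have hlim := tendstoInMeasure_comp_continuousAt (φ := fun z : ℝ × ℝ × ℝ => z.1 * (z.2.1 + z.2.2))
    (by fun_prop) (tendstoInMeasure_prodMk (tendstoInMeasure_const_of_tendsto hfactor)
      (tendstoInMeasure_prodMk (H.tendstoInMeasure_average_mul_ratio hm)
        (H.tendstoInMeasure_average_mul_ratioError HK hm)))
  simpa only [← gammaAr2_eq, add_zero, one_mul] using hlim

end KernelConsistency

theorem stmt10_general {Ω : Type*} [MeasurableSpace Ω] {μ : Measure Ω} [IsProbabilityMeasure μ]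
    {m : ℕ} {v : ℝ → ℝ} {g : ℕ → ℝ → ℝ} {ε : ℕ → ℕ → Ω → ℝ} {ν : ℝ} {K : ℝ → ℝ} {b : ℕ → ℝ}
    (H : ZeroReturnsModel μ m v g ε ν) (HK : KernelBandwidth K b) {ρε : ℕ → ℝ}
    (hρε : ∀ h : ℕ, 1 ≤ h → h ≤ m → ∀ n t : ℕ, h < t → t ≤ n → ∫ ω, ε n t ω * ε n (t - h) ω
      ∂(μ[|{ω | aproc v ε n t ω * aproc v ε n (t - h) ω = 1}]) = ρε h) :
    TendstoInMeasure μ (fun n ω (i : Fin m) => rhoHatVpr v ε K b n (i + 1) ω) atTop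
      fun _ i => ρε (i + 1) := by
  refine tendstoInMeasure_pi fun i => ?_
  have him : (i : ℕ) + 1 ≤ m := i.isLt
  have hΓ₀ := (H.limitGamma_pos m.zero_le).ne'
  have hΓ := (H.limitGamma_pos him).ne'
  have hlag := H.tendstoInMeasure_gammaHat0 him (hρε _ (by omega) him)
  have hzero := H.tendstoInMeasure_gammaHat0 m.zero_le fun n t => H.integral_cond_mul_self
  have hcorrection := H.tendstoInMeasure_gammaAr2 HK him
  have hlim := tendstoInMeasure_comp_continuousAt
    (φ := fun z : ℝ × ℝ × ℝ => z.2.1 / z.2.2 * (z.1 / z.2.1))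
    (by fun_prop (disch := simpa)) (tendstoInMeasure_prodMk hlag
      (tendstoInMeasure_prodMk hzero hcorrection))
  convert hlim using 2
  · rfl
  · dsimp only
    field_simp

/-- Under the non-stationary zero-returns model with mixing and the
kernel/bandwidth assumption, the corrected autocorrelation vector
`Γ̂_vpr(m) = (ρ̂_vpr(1),…,ρ̂_vpr(m))'` converges in probability to
`Γ_ε(m) = (ρ_ε(1),…,ρ_ε(m))'`. -/
theorem stmt10 {Ω : Type*} [MeasurableSpace Ω] (μ : Measure Ω) [IsProbabilityMeasure μ]
    (m : ℕ) (v : ℝ → ℝ) (g : ℕ → ℝ → ℝ) (c : ℝ) (ε : ℕ → ℕ → Ω → ℝ) (ν μ2 : ℝ)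
    (K : ℝ → ℝ) (R : ℝ) (b : ℕ → ℝ)
    -- deterministic variance function `v`
    (hc : 0 < c)
    (hv_pos : ∀ s ∈ Set.Ioc (0 : ℝ) 1, 0 < v s)
    (hv_bdd : ∃ M, ∀ s ∈ Set.Ioc (0 : ℝ) 1, |v s| ≤ M)
    (hv_lip : PiecewiseLipschitzOn01 v)
    (hv_ext : ∃ L, Tendsto v (nhdsWithin 0 (Set.Ioi 0)) (nhds L) ∧ ∀ u ≤ (0 : ℝ), v u = L)
    -- deterministic zero-returns probability functions `g_h`, `h = 0,…,m`
    (hg_bnd : ∀ h ≤ m, ∀ s ∈ Set.Ioc (0 : ℝ) 1, c < g h s ∧ g h s ≤ 1)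
    (hg_lip : ∀ h ≤ m, PiecewiseLipschitzOn01 (g h))
    (hg_ext : ∀ h ≤ m, ∃ L, Tendsto (g h) (nhdsWithin 0 (Set.Ioi 0)) (nhds L) ∧
      ∀ u ≤ (0 : ℝ), g h u = L)
    -- the innovations are measurable and `P(a_t a_{t-h} = 1) = g_h(t/n)`
    (hε_meas : ∀ n t, Measurable (ε n t))
    (hprob : ∀ h ≤ m, ∀ n t : ℕ, h < t → t ≤ n →
      (μ {ω | aproc v ε n t ω * aproc v ε n (t - h) ω = 1}).toReal = g h ((t : ℝ) / n))
    -- identifiability: `E(ε_t | a_t = 1) = 0` and `E(ε_t² | a_t = 1) = 1`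
    (hident1 : ∀ n t : ℕ, 1 ≤ t → t ≤ n →
      ∫ ω, ε n t ω ∂(μ[|{ω | aproc v ε n t ω = 1}]) = 0)
    (hident2 : ∀ n t : ℕ, 1 ≤ t → t ≤ n →
      ∫ ω, (ε n t ω) ^ 2 ∂(μ[|{ω | aproc v ε n t ω = 1}]) = 1)
    -- conditional strict stationarity
    (hstat : ∀ n k t h : ℕ,
      (μ[|{ω | (∀ i ≤ k, aproc v ε n (t + i) ω = 1) ∧
          ∀ i ≤ k, aproc v ε n (t + h + i) ω = 1}]).map
        (fun ω => fun i : Fin (k + 1) => ε n (t + (i : ℕ)) ω)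
      = (μ[|{ω | (∀ i ≤ k, aproc v ε n (t + i) ω = 1) ∧
          ∀ i ≤ k, aproc v ε n (t + h + i) ω = 1}]).map
        (fun ω => fun i : Fin (k + 1) => ε n (t + h + (i : ℕ)) ω))
    -- strong mixing and moment conditions
    (hν : 0 < ν) (hμ2a : 1 ≤ μ2) (hμ2b : μ2 < 1 + ν) (hμ2c : 1 + ν < 2 * μ2)
    (hmix : Summable (fun h : ℕ => alphaMix μ ε h ^ (1 - 1 / (2 * μ2))))
    (hmom : ∃ M : ℝ, ∀ n t : ℕ, 1 ≤ t → t ≤ n →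
      ∫⁻ ω, ENNReal.ofReal (|ε n t ω| ^ (2 + 2 * ν)) ∂μ ≤ ENNReal.ofReal M)
    -- kernel and bandwidth assumption
    (hK_cont : Continuous K) (hK_supp : HasCompactSupport K)
    (hK_nonneg : ∀ z, 0 ≤ K z) (hK_le : ∀ z, K z ≤ R)
    (hK_int : ∫ z : ℝ, K z = 1)
    (hb_pos : ∀ n, 0 < b n)
    (hb0 : Tendsto b atTop (nhds 0))
    (hnb : Tendsto (fun n : ℕ => 1 / ((n : ℝ) * (b n) ^ 2)) atTop (nhds 0))
    -- `ρ_ε(h)` does not depend on `t` nor on `n`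
    (ρε : ℕ → ℝ)
    (hρε : ∀ h : ℕ, 1 ≤ h → h ≤ m → ∀ n t : ℕ, h < t → t ≤ n →
      ∫ ω, ε n t ω * ε n (t - h) ω
          ∂(μ[|{ω | aproc v ε n t ω * aproc v ε n (t - h) ω = 1}]) = ρε h) :
    TendstoInMeasure μ
      (fun n : ℕ => fun ω => fun i : Fin m => rhoHatVpr v ε K b n (i + 1) ω) atTop
      (fun _ => fun i : Fin m => ρε (i + 1)) := by
  have hα := tendsto_alphaMix_of_summable_rpow
    (sub_pos.2 ((div_lt_one (by positivity)).2 (by linarith))) hmix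
  exact stmt10_general
    ⟨hε_meas, hv_pos, hv_bdd, hv_lip.ae_continuousAt,
      fun h hm s hs => hc.trans (hg_bnd h hm s hs).1, fun h hm s hs => (hg_bnd h hm s hs).2,
      fun h hm => (hg_lip h hm).ae_continuousAt, hprob, hident2, hα, hν, hmom⟩
    ⟨hK_cont, hK_supp, hK_nonneg, hK_int, hb_pos, hb0, tendsto_mul_bandwidth_atTop hb_pos hb0 hnb⟩
    hρε

end ZeroReturnsNS
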